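/- Let K ⊆ ℂ be a compact convex set containing two distinct purely imaginary points, and let c > 1. Then there exists a function f ∈ Exp(K) that is frequently hypercyclic for T₁ on Exp(K) and satisfies sup_{x∈ℝ} |f(x)|/(1+|x|^c) < ∞, i.e., |f(x)| = O(1+|x|^c) on the real axis. -/

import Mathlib

/-
Exponentials are total in `Exp(K)`. Surround `K` by a slightly larger polygon with vertices `b j`,
and damp the difference quotient of `g` at `z` by `exp ((z - ζ) * b j)` in the `j`-th sector.
Cauchy's theorem over the sectors expresses `g z` through the jumps of these damped quotients
along the rays, and each jump is a mean of the exponentials `exp (w * z)` over an edge of the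
polygon. In the space of functions bounded with respect to a weight of `Exp(K)` this becomes a
Bochner integral, so a closed subspace containing every such exponential contains `g`; as the
class of `exp (w * z)` modulo the subspace is analytic in `w`, it is enough that the subspace
contains these exponentials for `w` on a set accumulating at a point of `K`.

Take `w` on the segment `[u, v]`. There `exp (w * z)` is a limit of the functions
`exp (a * z) * ((exp (d * z) - 1) / (d * z)) ^ 4` with `a, a + 4 * d ∈ [u, v]`, which are
`O(exp (H z) / |z| ^ 4)` for the support function `H` of `[u, v]`. Since `[u, v]` is purely
imaginary, `H` is invariant under real translations, so series of translates of such functions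
converge. Place the `s`-th term of a slowly growing dense sequence of combinations at the
positions labelled `s`, where the `m`-th label is the 2-adic valuation of `m + 1` and the gap
around a position is proportional to its label. Each label occurs with positive density, and near
a position labelled `s` all other terms together are `O(1 / (s + 1))`. The `m`-th label is
`O(log m)`, which bounds the growth on the real axis.
-/

open Filter Complex

/-- Support function `H_K(z) = sup { Re (z·u) : u ∈ K }` of a set `K ⊆ ℂ`. -/
noncomputable def suppFn (K : Set ℂ) (z : ℂ) : ℝ :=
  sSup ((fun u => (z * u).re) '' K)

/-- The norm `‖f‖_{K,n} = sup_z |f z| · exp (−H_K z − |z|/n)`. -/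
noncomputable def expNorm (K : Set ℂ) (n : ℕ) (f : ℂ → ℂ) : ℝ :=
  sSup (Set.range fun z : ℂ => ‖f z‖ * Real.exp (-(suppFn K z) - ‖z‖ / n))

/-- Membership in `Exp(K)`: `f` is entire and all the norms `‖f‖_{K,n}` are finite. -/
def MemExp (K : Set ℂ) (f : ℂ → ℂ) : Prop :=
  Differentiable ℂ f ∧ ∀ n : ℕ, 0 < n →
    BddAbove (Set.range fun z : ℂ => ‖f z‖ * Real.exp (-(suppFn K z) - ‖z‖ / n))

open scoped Classical in
/-- Lower density of a set of natural numbers. -/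
noncomputable def lowerDensity (A : Set ℕ) : ℝ :=
  liminf (fun N : ℕ =>
    (((Finset.range (N + 1)).filter (fun n => n ∈ A)).card : ℝ) / N) atTop

/-- Lower density of a discrete subset of `ℂ`. -/
noncomputable def ldensC (Λ : Set ℂ) : ℝ :=
  liminf (fun r : ℝ => (Nat.card {z : ℂ // z ∈ Λ ∧ ‖z‖ ≤ r} : ℝ) / r) atTop

/-- `f` is hypercyclic for the translation `T₁` on `Exp(K)`. -/
def HCExp (K : Set ℂ) (f : ℂ → ℂ) : Prop :=
  MemExp K f ∧ ∀ g : ℂ → ℂ, MemExp K g → ∀ n : ℕ, 0 < n → ∀ ε > (0 : ℝ),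
    ∃ k : ℕ, expNorm K n (fun z => f (z + (k : ℂ)) - g z) < ε

/-- `f` is frequently hypercyclic for the translation `T₁` on `Exp(K)`. -/
def FHCExp (K : Set ℂ) (f : ℂ → ℂ) : Prop :=
  MemExp K f ∧ ∀ g : ℂ → ℂ, MemExp K g → ∀ n : ℕ, 0 < n → ∀ ε > (0 : ℝ),
    0 < lowerDensity {k : ℕ | expNorm K n (fun z => f (z + (k : ℂ)) - g z) < ε}

/-- `f` is hypercyclic (Birkhoff-universal) for `T₁` on `H(ℂ)`. -/
def HCEnt (f : ℂ → ℂ) : Prop :=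
  Differentiable ℂ f ∧ ∀ g : ℂ → ℂ, Differentiable ℂ g → ∀ R > (0 : ℝ), ∀ ε > (0 : ℝ),
    ∃ k : ℕ, ∀ z : ℂ, ‖z‖ ≤ R → ‖f (z + (k : ℂ)) - g z‖ < ε

/-- `f` is frequently hypercyclic (frequently Birkhoff-universal) for `T₁` on `H(ℂ)`. -/
def FHCEnt (f : ℂ → ℂ) : Prop :=
  Differentiable ℂ f ∧ ∀ g : ℂ → ℂ, Differentiable ℂ g → ∀ R > (0 : ℝ), ∀ ε > (0 : ℝ),
    0 < lowerDensity {k : ℕ | ∀ z : ℂ, ‖z‖ ≤ R → ‖f (z + (k : ℂ)) - g z‖ < ε}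

/-- `f` is an entire function of (finite) exponential type. -/
def ExpType (f : ℂ → ℂ) : Prop :=
  Differentiable ℂ f ∧ ∃ C τ : ℝ, ∀ z : ℂ, ‖f z‖ ≤ C * Real.exp (τ * ‖z‖)

/-- The indicator function `h_f(θ) = limsup_{r→∞} log |f(r e^{iθ})| / r`. -/
noncomputable def indicatorFn (f : ℂ → ℂ) (θ : ℝ) : ℝ :=
  limsup (fun r : ℝ => Real.log ‖f ((r : ℂ) * Complex.exp (θ * Complex.I))‖ / r) atTop

open Set Topology
open scoped ENNReal

section SupportFunction

variable {J K : Set ℂ}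

lemma re_mul_le_suppFn (hK : IsCompact K) (z : ℂ) {w : ℂ} (hw : w ∈ K) :
    (z * w).re ≤ suppFn K z :=
  le_csSup (hK.bddAbove_image (by fun_prop)) ⟨w, hw, rfl⟩

lemma exists_suppFn_eq (hK : IsCompact K) (hne : K.Nonempty) (z : ℂ) :
    ∃ k ∈ K, suppFn K z = (z * k).re := by
  obtain ⟨k, hk, h, -⟩ := hK.exists_sSup_image_eq_and_ge hne
    (f := fun u => (z * u).re) (by fun_prop)
  exact ⟨k, hk, h⟩

lemma suppFn_mono (hJne : J.Nonempty) (hJK : J ⊆ K) (hK : IsCompact K) (z : ℂ) :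
    suppFn J z ≤ suppFn K z :=
  csSup_le_csSup (hK.bddAbove_image (by fun_prop)) (hJne.image _) (image_mono hJK)

lemma suppFn_ofReal_mul {r : ℝ} (hr : 0 ≤ r) (z : ℂ) : suppFn K (r * z) = r * suppFn K z := by
  simp only [suppFn, mul_assoc, re_ofReal_mul]
  rw [← smul_eq_mul, ← Real.sSup_smul_of_nonneg hr, ← image_smul, image_image]
  rfl

lemma suppFn_le_add (hK : IsCompact K) (hne : K.Nonempty) {M : ℝ} (hM : ∀ k ∈ K, ‖k‖ ≤ M)
    (z w : ℂ) : suppFn K z ≤ suppFn K w + M * ‖z - w‖ := by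
  obtain ⟨k, hk, h⟩ := exists_suppFn_eq hK hne z
  calc suppFn K z = (w * k).re + (k * (z - w)).re := by rw [h, ← add_re]; ring_nf
    _ ≤ suppFn K w + ‖k * (z - w)‖ := add_le_add (re_mul_le_suppFn hK w hk) (re_le_norm _)
    _ ≤ suppFn K w + M * ‖z - w‖ := by rw [norm_mul]; gcongr; exact hM k hk

lemma continuous_suppFn (hK : IsCompact K) (hne : K.Nonempty) : Continuous (suppFn K) := by
  obtain ⟨M, hM⟩ := hK.isBounded.exists_norm_le
  exact (LipschitzWith.of_le_add_mul' M fun z w => by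
    simpa [dist_eq_norm] using suppFn_le_add hK hne hM z w).continuous

lemma suppFn_add_ofReal (hK : ∀ k ∈ K, k.re = 0) (z : ℂ) (x : ℝ) :
    suppFn K (z + x) = suppFn K z :=
  congrArg sSup (image_congr fun k hk => by simp [add_mul, hK k hk])

lemma suppFn_ofReal_eq_zero (hK : ∀ k ∈ K, k.re = 0) (x : ℝ) : suppFn K x = 0 := by
  have h := suppFn_ofReal_mul (K := K) le_rfl 0
  rw [← zero_add (x : ℂ), suppFn_add_ofReal hK]
  simpa using h

end SupportFunction

lemma differentiable_dslope {f : ℂ → ℂ} (hf : Differentiable ℂ f) (z : ℂ) :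
    Differentiable ℂ (dslope f z) :=
  differentiableOn_univ.1 <| (differentiableOn_dslope univ_mem).2 hf.differentiableOn

section ExpSlope

/-- The entire function `(exp z - 1) / z`, the slope of the exponential at `0`; its value at `0`
is `1`. -/
noncomputable def expSlope : ℂ → ℂ := dslope exp 0

lemma differentiable_expSlope : Differentiable ℂ expSlope :=
  differentiable_dslope differentiable_exp 0

lemma mul_expSlope (z : ℂ) : z * expSlope z = exp z - 1 := by
  simpa [expSlope] using sub_smul_dslope exp 0 z

lemma expSlope_eq_integral (z : ℂ) : expSlope z = ∫ t in (0 : ℝ)..1, exp (z * t) := by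
  rcases eq_or_ne z 0 with rfl | hz
  · simp [expSlope]
  · rw [integral_exp_mul_complex hz, eq_div_iff hz, mul_comm, mul_expSlope]
    simp

lemma max_zero_re_mul_ofReal_le (z : ℂ) {t : ℝ} (ht : t ∈ Icc (0 : ℝ) 1) :
    max 0 (z * t).re ≤ max 0 z.re := by
  rw [re_mul_ofReal]
  refine max_le (le_max_left _ _) ?_
  rcases le_total z.re 0 with h | h
  · exact le_max_of_le_left (mul_nonpos_of_nonpos_of_nonneg h ht.1)
  · exact le_max_of_le_right (mul_le_of_le_one_right h ht.2)

lemma norm_expSlope_le (z : ℂ) : ‖expSlope z‖ ≤ Real.exp (max 0 z.re) := by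
  have h : ∀ t ∈ uIoc (0 : ℝ) 1, ‖exp (z * t)‖ ≤ Real.exp (max 0 z.re) := fun t ht => by
    rw [uIoc_of_le zero_le_one] at ht
    rw [norm_exp, Real.exp_le_exp]
    exact (le_max_right _ _).trans (max_zero_re_mul_ofReal_le z (Ioc_subset_Icc_self ht))
  simpa [expSlope_eq_integral] using intervalIntegral.norm_integral_le_of_norm_le_const h

lemma norm_exp_sub_one_le_mul_exp (z : ℂ) : ‖exp z - 1‖ ≤ ‖z‖ * Real.exp (max 0 z.re) := by
  rw [← mul_expSlope, norm_mul]
  gcongr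
  exact norm_expSlope_le z

lemma norm_expSlope_sub_one_le (z : ℂ) : ‖expSlope z - 1‖ ≤ ‖z‖ * Real.exp (max 0 z.re) := by
  have heq : expSlope z - 1 = ∫ t in (0 : ℝ)..1, (exp (z * t) - 1) := by
    rw [intervalIntegral.integral_sub (Continuous.intervalIntegrable (by fun_prop) _ _) (by simp),
      ← expSlope_eq_integral]
    simp
  have h : ∀ t ∈ uIoc (0 : ℝ) 1, ‖exp (z * t) - 1‖ ≤ ‖z‖ * Real.exp (max 0 z.re) := fun t ht => by
    rw [uIoc_of_le zero_le_one] at ht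
    refine (norm_exp_sub_one_le_mul_exp _).trans (mul_le_mul ?_ (Real.exp_le_exp.2 ?_)
      (Real.exp_nonneg _) (norm_nonneg z))
    · simpa [abs_of_pos ht.1] using mul_le_of_le_one_right (norm_nonneg z) ht.2
    · exact max_zero_re_mul_ofReal_le z (Ioc_subset_Icc_self ht)
  simpa [heq] using intervalIntegral.norm_integral_le_of_norm_le_const h

lemma norm_expSlope_mul_le (z : ℂ) :
    ‖expSlope z‖ * (1 + ‖z‖) ≤ 3 * Real.exp (max 0 z.re) := by
  have h : ‖expSlope z‖ * ‖z‖ ≤ 2 * Real.exp (max 0 z.re) := calc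
    ‖expSlope z‖ * ‖z‖ = ‖exp z - 1‖ := by rw [← mul_expSlope, norm_mul, mul_comm]
    _ ≤ Real.exp z.re + 1 := by simpa [norm_exp] using norm_sub_le (exp z) 1
    _ ≤ Real.exp (max 0 z.re) + Real.exp (max 0 z.re) := by
      gcongr
      · exact le_max_right _ _
      · exact Real.one_le_exp (le_max_left _ _)
    _ = 2 * Real.exp (max 0 z.re) := by ring
  linarith [norm_expSlope_le z]

end ExpSlope

section DampedExp

/-- The exponential `z ↦ exp (z * a)` damped by the factor `expSlope (d * z) ^ 4`, which makes it
an average of the functions `z ↦ exp (z * b)` over `b` in the segment from `a` to `a + 4 * d`. -/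
noncomputable def dampedExp (a d z : ℂ) : ℂ := exp (z * a) * expSlope (d * z) ^ 4

variable {J : Set ℂ} {a d : ℂ}

lemma differentiable_dampedExp (a d : ℂ) : Differentiable ℂ (dampedExp a d) := by
  have := differentiable_expSlope
  unfold dampedExp
  fun_prop

lemma norm_exp_mul_exp_max_pow_le (hJ : IsCompact J) (ha : a ∈ J) (hd : a + 4 * d ∈ J) (z : ℂ) :
    ‖exp (z * a)‖ * Real.exp (max 0 (d * z).re) ^ 4 ≤ Real.exp (suppFn J z) := by
  rw [norm_exp, ← Real.exp_nat_mul, ← Real.exp_add, Real.exp_le_exp]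
  have hre : (z * (a + 4 * d)).re = (z * a).re + 4 * (d * z).re := by
    rw [mul_add, add_re, mul_left_comm, mul_comm z d, mul_re 4]
    simp
  have h0 := re_mul_le_suppFn hJ z ha
  have h1 := re_mul_le_suppFn hJ z hd
  rcases max_cases 0 (d * z).re with ⟨h, -⟩ | ⟨h, -⟩ <;> rw [h] <;> push_cast <;> linarith

lemma norm_dampedExp_le (hJ : IsCompact J) (ha : a ∈ J) (hd : a + 4 * d ∈ J) (z : ℂ) :
    ‖dampedExp a d z‖ ≤ Real.exp (suppFn J z) := by
  refine le_trans ?_ (norm_exp_mul_exp_max_pow_le hJ ha hd z)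
  rw [dampedExp, norm_mul, norm_pow]
  gcongr
  exact norm_expSlope_le _

lemma norm_dampedExp_le_div (hJ : IsCompact J) (ha : a ∈ J) (hd : a + 4 * d ∈ J) (hd0 : d ≠ 0)
    (z : ℂ) :
    ‖dampedExp a d z‖ ≤ (3 * (1 + 1 / ‖d‖)) ^ 4 * Real.exp (suppFn J z) / (1 + ‖z‖) ^ 4 := by
  have : 0 < ‖d‖ := norm_pos_iff.2 hd0
  have hz : 1 + ‖z‖ ≤ (1 + 1 / ‖d‖) * (1 + ‖d * z‖) := calc
    1 + ‖z‖ ≤ 1 + ‖z‖ + (1 / ‖d‖ + ‖d‖ * ‖z‖) := le_add_of_nonneg_right (by positivity)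
    _ = (1 + 1 / ‖d‖) * (1 + ‖d * z‖) := by rw [norm_mul]; field_simp; ring
  have hslope : ‖expSlope (d * z)‖ * (1 + ‖z‖) ≤
      3 * (1 + 1 / ‖d‖) * Real.exp (max 0 (d * z).re) := calc
    _ ≤ ‖expSlope (d * z)‖ * ((1 + 1 / ‖d‖) * (1 + ‖d * z‖)) := by gcongr
    _ = (1 + 1 / ‖d‖) * (‖expSlope (d * z)‖ * (1 + ‖d * z‖)) := by ring
    _ ≤ (1 + 1 / ‖d‖) * (3 * Real.exp (max 0 (d * z).re)) :=
      mul_le_mul_of_nonneg_left (norm_expSlope_mul_le _) (by positivity)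
    _ = _ := by ring
  rw [le_div_iff₀ (by positivity), dampedExp, norm_mul, norm_pow]
  calc ‖exp (z * a)‖ * ‖expSlope (d * z)‖ ^ 4 * (1 + ‖z‖) ^ 4
    _ = ‖exp (z * a)‖ * (‖expSlope (d * z)‖ * (1 + ‖z‖)) ^ 4 := by ring
    _ ≤ ‖exp (z * a)‖ * (3 * (1 + 1 / ‖d‖) * Real.exp (max 0 (d * z).re)) ^ 4 := by gcongr
    _ = (3 * (1 + 1 / ‖d‖)) ^ 4 * (‖exp (z * a)‖ * Real.exp (max 0 (d * z).re) ^ 4) := by ring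
    _ ≤ (3 * (1 + 1 / ‖d‖)) ^ 4 * Real.exp (suppFn J z) := by
      gcongr
      exact norm_exp_mul_exp_max_pow_le hJ ha hd z

lemma norm_dampedExp_sub_exp_le (hJ : IsCompact J) (ha : a ∈ J) (hd : a + 4 * d ∈ J) (z : ℂ) :
    ‖dampedExp a d z - exp (z * a)‖ ≤ 4 * ‖d‖ * ‖z‖ * Real.exp (suppFn J z) := by
  set s := expSlope (d * z)
  set E := Real.exp (max 0 (d * z).re)
  have hs : ‖s‖ ≤ E := norm_expSlope_le _
  have hE : 1 ≤ E := Real.one_le_exp (le_max_left _ _)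
  have hsum : ‖s ^ 3 + s ^ 2 + s + 1‖ ≤ 4 * E ^ 3 := calc
    _ ≤ ‖s‖ ^ 3 + ‖s‖ ^ 2 + ‖s‖ + 1 := by
      simp only [← norm_pow]
      simpa only [norm_one] using norm_add₄_le (a := s ^ 3) (b := s ^ 2) (c := s) (d := 1)
    _ ≤ E ^ 3 + E ^ 2 + E + 1 := by gcongr
    _ ≤ 4 * E ^ 3 := by
      linarith [pow_le_pow_right₀ hE (by norm_num : 2 ≤ 3), le_self_pow₀ hE three_ne_zero,
        one_le_pow₀ hE (n := 3)]
  calc ‖dampedExp a d z - exp (z * a)‖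
    _ = ‖exp (z * a)‖ * (‖s - 1‖ * ‖s ^ 3 + s ^ 2 + s + 1‖) := by
      rw [← norm_mul, ← norm_mul, dampedExp]
      congr 1
      ring
    _ ≤ ‖exp (z * a)‖ * (‖d * z‖ * E * (4 * E ^ 3)) := by
      gcongr
      exact norm_expSlope_sub_one_le _
    _ = 4 * ‖d‖ * ‖z‖ * (‖exp (z * a)‖ * E ^ 4) := by rw [norm_mul]; ring
    _ ≤ 4 * ‖d‖ * ‖z‖ * Real.exp (suppFn J z) := by
      gcongr
      exact norm_exp_mul_exp_max_pow_le hJ ha hd z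

end DampedExp

section SectorIntegrals

/-- The contour integral of `h` along the segment from `0` to `R * exp (θ * I)`. -/
noncomputable def rayIntegral (h : ℂ → ℂ) (θ R : ℝ) : ℂ :=
  ∫ r in (0 : ℝ)..R, exp (θ * I) * h (circleMap 0 r θ)

/-- The contour integral of `h` along the arc of the circle of radius `R` around `0` between the
angles `α` and `β`. -/
noncomputable def arcIntegral (h : ℂ → ℂ) (R α β : ℝ) : ℂ :=
  ∫ θ in α..β, deriv (circleMap 0 R) θ * h (circleMap 0 R θ)

lemma hasDerivAt_circleMap_radius (r θ : ℝ) :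
    HasDerivAt (fun r : ℝ => circleMap 0 r θ) (exp (θ * I)) r := by
  simpa [circleMap] using (ofRealCLM.hasDerivAt (x := r)).mul_const (exp (θ * I))

lemma continuous_circleMap_radius (θ : ℝ) : Continuous fun r : ℝ => circleMap 0 r θ := by
  unfold circleMap
  fun_prop

lemma continuous_deriv_circleMap (R : ℝ) : Continuous (deriv (circleMap 0 R)) := by
  simp only [funext (deriv_circleMap 0 R)]
  fun_prop

lemma rayIntegral_add_arcIntegral {h : ℂ → ℂ} (hh : Differentiable ℂ h) (R α β : ℝ) :
    rayIntegral h α R + arcIntegral h R α β = rayIntegral h β R := by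
  obtain ⟨H, hH⟩ := hh.isExactOn_univ
  replace hH : ∀ z, HasDerivAt H (h z) z := fun z => hH z (mem_univ z)
  have hray (θ : ℝ) : rayIntegral h θ R = H (circleMap 0 R θ) - H (circleMap 0 0 θ) :=
    intervalIntegral.integral_eq_sub_of_hasDerivAt (f := fun r : ℝ => H (circleMap 0 r θ))
      (fun r _ => (hH _).scomp r (hasDerivAt_circleMap_radius r θ))
      ((continuous_const.mul
        (hh.continuous.comp (continuous_circleMap_radius θ))).intervalIntegrable _ _)
  have harc : arcIntegral h R α β = H (circleMap 0 R β) - H (circleMap 0 R α) :=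
    intervalIntegral.integral_eq_sub_of_hasDerivAt (f := fun θ => H (circleMap 0 R θ))
      (fun θ _ => (hH _).scomp θ (differentiable_circleMap 0 R θ).hasDerivAt)
      (((continuous_deriv_circleMap R).mul
        (hh.continuous.comp (continuous_circleMap 0 R))).intervalIntegrable _ _)
  rw [hray, harc, hray, circleMap_zero_radius, Function.const_apply, Function.const_apply]
  ring

lemma sum_rayIntegral_sub {h : ℕ → ℂ → ℂ} (hh : ∀ j, Differentiable ℂ (h j)) {θ : ℕ → ℝ} {N : ℕ}
    (hhN : h N = h 0) (hθN : θ N = θ 0 + 2 * Real.pi) (R : ℝ) :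
    ∑ j ∈ Finset.range N,
        (rayIntegral (h (j + 1)) (θ (j + 1)) R - rayIntegral (h j) (θ (j + 1)) R) =
      -∑ j ∈ Finset.range N, arcIntegral (h j) R (θ j) (θ (j + 1)) := by
  have hperiod : rayIntegral (h N) (θ N) R = rayIntegral (h 0) (θ 0) R := by
    simp [rayIntegral, circleMap, hhN, hθN, add_mul, exp_add]
  calc _ = ∑ j ∈ Finset.range N,
        ((rayIntegral (h (j + 1)) (θ (j + 1)) R - rayIntegral (h j) (θ j) R) -
          arcIntegral (h j) R (θ j) (θ (j + 1))) := by
        refine Finset.sum_congr rfl fun j _ => ?_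
        rw [sub_sub, rayIntegral_add_arcIntegral (hh j)]
    _ = _ := by
      rw [Finset.sum_sub_distrib, Finset.sum_range_sub fun j => rayIntegral (h j) (θ j) R,
        hperiod, sub_self, zero_sub]

lemma sum_arcIntegral_sub_inv {z : ℂ} {R : ℝ} (hz : ‖z‖ < R) {θ : ℕ → ℝ} {N : ℕ} (hθ0 : θ 0 = 0)
    (hθN : θ N = 2 * Real.pi) :
    ∑ j ∈ Finset.range N, arcIntegral (fun ζ => (ζ - z)⁻¹) R (θ j) (θ (j + 1)) =
      2 * Real.pi * I := by
  simp only [arcIntegral]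
  rw [intervalIntegral.sum_integral_adjacent_intervals, hθ0, hθN]
  · exact circleIntegral.integral_sub_inv_of_mem_ball (by simpa using hz)
  · exact fun j _ => ((continuous_deriv_circleMap R).mul
      (continuous_circleMap_inv (by simpa using hz))).intervalIntegrable _ _

end SectorIntegrals

section DampedSlope

/-- The slope at `z` of `ζ ↦ g ζ * exp (-w * (ζ - z))`: away from `z` it is
`(g ζ * exp (-w * (ζ - z)) - g z) / (ζ - z)`, and it is entire if `g` is. -/
noncomputable def dampedSlope (g : ℂ → ℂ) (z w : ℂ) : ℂ → ℂ :=
  dslope (fun ζ => g ζ * exp (-(w * (ζ - z)))) z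

variable {g : ℂ → ℂ} {z w : ℂ}

lemma differentiable_dampedSlope (hg : Differentiable ℂ g) (z w : ℂ) :
    Differentiable ℂ (dampedSlope g z w) :=
  differentiable_dslope (by fun_prop) z

lemma dampedSlope_of_ne (g : ℂ → ℂ) (w : ℂ) {ζ : ℂ} (hζ : ζ ≠ z) :
    dampedSlope g z w ζ = (g ζ * exp (-(w * (ζ - z))) - g z) * (ζ - z)⁻¹ := by
  simp [dampedSlope, dslope_of_ne _ hζ, slope_def_field, div_eq_mul_inv]

lemma dampedSlope_self (hg : Differentiable ℂ g) (z w : ℂ) :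
    dampedSlope g z w z = deriv g z - w * g z := by
  have hexp : HasDerivAt (fun ζ => exp (-(w * (ζ - z)))) (exp (-(w * (z - z))) * -(w * 1)) z :=
    (((hasDerivAt_id z).sub_const z).const_mul w).neg.cexp
  rw [dampedSlope, dslope_same]
  refine ((hg z).hasDerivAt.mul hexp).deriv.trans ?_
  rw [sub_self, mul_zero, neg_zero, exp_zero]
  ring

lemma dampedSlope_sub_dampedSlope (hg : Differentiable ℂ g) (z b b' ζ : ℂ) :
    dampedSlope g z b' ζ - dampedSlope g z b ζ =
      (b - b') * g ζ * ∫ t in (0 : ℝ)..1, exp (-(AffineMap.lineMap b b' t * (ζ - z))) := by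
  have hint : ∫ t in (0 : ℝ)..1, exp (-(AffineMap.lineMap b b' t * (ζ - z))) =
      exp (-(b * (ζ - z))) * expSlope ((b - b') * (ζ - z)) := by
    rw [expSlope_eq_integral, ← intervalIntegral.integral_const_mul]
    congr! 2
    rw [← exp_add, AffineMap.lineMap_apply_module', real_smul]
    ring_nf
  rw [hint]
  rcases eq_or_ne ζ z with rfl | hζ
  · simp only [dampedSlope_self hg, sub_self, mul_zero, neg_zero, exp_zero, expSlope, dslope_same,
      Complex.deriv_exp]
    ring
  · have hζ' := sub_ne_zero.2 hζ
    rw [dampedSlope_of_ne _ _ hζ, dampedSlope_of_ne _ _ hζ, ← sub_mul, mul_inv_eq_iff_eq_mul₀ hζ']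
    calc _ = g ζ * exp (-(b * (ζ - z))) * (exp ((b - b') * (ζ - z)) - 1) := by
          rw [mul_sub (g ζ * _), mul_assoc, ← exp_add]
          ring_nf
      _ = _ := by rw [← mul_expSlope]; ring

lemma arcIntegral_dampedSlope (hg : Continuous g) (w : ℂ) {R : ℝ} (hz : ‖z‖ < R) (α β : ℝ) :
    arcIntegral (dampedSlope g z w) R α β =
      arcIntegral (fun ζ => g ζ * exp (-(w * (ζ - z))) * (ζ - z)⁻¹) R α β -
        g z * arcIntegral (fun ζ => (ζ - z)⁻¹) R α β := by
  have hderiv := continuous_deriv_circleMap R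
  have hinv : Continuous fun θ => (circleMap 0 R θ - z)⁻¹ :=
    continuous_circleMap_inv (by simpa using hz)
  have hne (θ : ℝ) : circleMap 0 R θ ≠ z := fun h => by
    rw [← h, norm_circleMap_zero] at hz
    exact hz.not_ge (le_abs_self R)
  simp only [arcIntegral, ← intervalIntegral.integral_const_mul, dampedSlope_of_ne g w (hne _)]
  rw [← intervalIntegral.integral_sub]
  · congr! 2
    ring
  all_goals exact Continuous.intervalIntegrable (by fun_prop) _ _

lemma half_le_norm_circleMap_sub {R : ℝ} (hR : 1 + 2 * ‖z‖ ≤ R) (θ : ℝ) :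
    R / 2 ≤ ‖circleMap 0 R θ - z‖ := by
  have hz := norm_nonneg z
  have h := norm_sub_norm_le (circleMap 0 R θ) z
  rw [norm_circleMap_zero, abs_of_nonneg (by linarith)] at h
  linarith

lemma tendsto_arcIntegral_zero {C η α β : ℝ} (hη : 0 < η) (hαβ : α ≤ β)
    (hbd : ∀ r, 0 ≤ r → ∀ θ ∈ Icc α β,
      ‖g (circleMap 0 r θ) * exp (-(w * circleMap 0 r θ))‖ ≤ C * Real.exp (-(η * r))) (z : ℂ) :
    Tendsto (fun R => arcIntegral (fun ζ => g ζ * exp (-(w * (ζ - z))) * (ζ - z)⁻¹) R α β)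
      atTop (𝓝 0) := by
  have hlim : Tendsto (fun R => 2 * C * ‖exp (w * z)‖ * Real.exp (-(η * R)) * |β - α|) atTop
      (𝓝 (2 * C * ‖exp (w * z)‖ * 0 * |β - α|)) :=
    ((Real.tendsto_exp_neg_atTop_nhds_zero.comp
      (tendsto_id.const_mul_atTop hη)).const_mul _).mul_const _
  rw [mul_zero, zero_mul] at hlim
  refine squeeze_zero_norm' ?_ hlim
  filter_upwards [eventually_ge_atTop (1 + 2 * ‖z‖)] with R hR
  refine intervalIntegral.norm_integral_le_of_norm_le_const fun θ hθ => ?_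
  rw [uIoc_of_le hαβ] at hθ
  have hR0 : 0 < R := by linarith [norm_nonneg z]
  have hexp : exp (-(w * (circleMap 0 R θ - z))) =
      exp (-(w * circleMap 0 R θ)) * exp (w * z) := by
    rw [← exp_add]
    ring_nf
  calc _ = ‖g (circleMap 0 R θ) * exp (-(w * circleMap 0 R θ))‖ * ‖exp (w * z)‖ *
        (R * ‖circleMap 0 R θ - z‖⁻¹) := by
        simp only [hexp, deriv_circleMap, norm_mul, norm_inv, norm_circleMap_zero, norm_I,
          abs_of_pos hR0]
        ring
    _ ≤ C * Real.exp (-(η * R)) * ‖exp (w * z)‖ * (R * (R / 2)⁻¹) := by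
      have hbd' := hbd R hR0.le θ (Ioc_subset_Icc_self hθ)
      have := (norm_nonneg _).trans hbd'
      gcongr
      · exact half_le_norm_circleMap_sub hR θ
    _ = _ := by field_simp

theorem tendsto_sum_rayIntegral_dampedSlope_sub (hg : Differentiable ℂ g) {b : ℕ → ℂ} {θ : ℕ → ℝ}
    {N : ℕ} (hb : b N = b 0) (hθ : Monotone θ) (hθ0 : θ 0 = 0) (hθN : θ N = 2 * Real.pi)
    {C η : ℝ} (hη : 0 < η)
    (hbd : ∀ j, ∀ r, 0 ≤ r → ∀ φ ∈ Icc (θ j) (θ (j + 1)),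
      ‖g (circleMap 0 r φ) * exp (-(b j * circleMap 0 r φ))‖ ≤ C * Real.exp (-(η * r))) (z : ℂ) :
    Tendsto (fun R => ∑ j ∈ Finset.range N,
        (rayIntegral (dampedSlope g z (b (j + 1))) (θ (j + 1)) R -
          rayIntegral (dampedSlope g z (b j)) (θ (j + 1)) R))
      atTop (𝓝 (2 * Real.pi * I * g z)) := by
  have harc : Tendsto (fun R => 2 * Real.pi * I * g z - ∑ j ∈ Finset.range N,
      arcIntegral (fun ζ => g ζ * exp (-(b j * (ζ - z))) * (ζ - z)⁻¹) R (θ j) (θ (j + 1)))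
      atTop (𝓝 (2 * Real.pi * I * g z - ∑ j ∈ Finset.range N, 0)) :=
    tendsto_const_nhds.sub <| tendsto_finsetSum _ fun j _ =>
      tendsto_arcIntegral_zero hη (hθ j.le_succ) (hbd j) z
  rw [Finset.sum_const_zero, sub_zero] at harc
  refine harc.congr' ?_
  filter_upwards [eventually_gt_atTop ‖z‖] with R hR
  rw [sum_rayIntegral_sub (h := fun j => dampedSlope g z (b j))
    (fun j => differentiable_dampedSlope hg z _) (by simp only [hb]) (by rw [hθN, hθ0, zero_add])]
  simp only [arcIntegral_dampedSlope hg.continuous _ hR]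
  rw [Finset.sum_sub_distrib, ← Finset.mul_sum, sum_arcIntegral_sub_inv hR hθ0 hθN]
  ring

end DampedSlope

section Polygon

variable {K : Set ℂ}

lemma exists_suppFn_add_le_re (hK : IsCompact K) (hne : K.Nonempty) {ε : ℝ} (hε : 0 < ε) :
    ∃ σ > 0, ∀ e : ℂ, ‖e‖ = 1 → ∃ b ∈ Metric.thickening ε K, ∀ e' : ℂ, ‖e' - e‖ ≤ σ →
      suppFn K e' + ε / 4 ≤ (b * e').re := by
  obtain ⟨M, hM0, hM⟩ := hK.isBounded.exists_pos_norm_le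
  refine ⟨ε / 4 / (2 * M + ε / 2), by positivity, fun e he => ?_⟩
  obtain ⟨k, hk, hke⟩ := exists_suppFn_eq hK hne e
  set b : ℂ := k + (ε / 2 : ℝ) * (starRingEnd ℂ) e
  have hbk : ‖b - k‖ = ε / 2 := by simp [b, he, abs_of_pos hε]
  refine ⟨b, Metric.mem_thickening_iff.2 ⟨k, hk, by rw [dist_eq_norm, hbk]; linarith⟩,
    fun e' he' => ?_⟩
  have hbe : (b * e).re = suppFn K e + ε / 2 := by
    rw [hke, add_mul, mul_assoc, conj_mul', he, add_re, mul_comm k]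
    simp
  have hb : ‖b‖ ≤ M + ε / 2 := by
    linarith [norm_le_norm_add_norm_sub' b k, hM k hk]
  have hbee' : (b * (e - e')).re ≤ (M + ε / 2) * ‖e' - e‖ :=
    (re_le_norm _).trans (by rw [norm_mul, norm_sub_rev]; gcongr)
  rw [mul_sub, sub_re] at hbee'
  have hσ : (2 * M + ε / 2) * ‖e' - e‖ ≤ ε / 4 := by
    rwa [le_div_iff₀' (by positivity)] at he'
  linarith [suppFn_le_add hK hne hM e' e]

lemma circleMap_zero_eq_mul (r θ : ℝ) : circleMap 0 r θ = r * circleMap 0 1 θ := by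
  simp [circleMap]

lemma exists_polygon_suppFn_add_le_re (hK : IsCompact K) (hne : K.Nonempty) {ε : ℝ} (hε : 0 < ε) :
    ∃ (N : ℕ) (θ : ℕ → ℝ) (b : ℕ → ℂ), Monotone θ ∧ θ 0 = 0 ∧ θ N = 2 * Real.pi ∧ b N = b 0 ∧
      (∀ j, b j ∈ Metric.thickening ε K) ∧
      ∀ j, ∀ r, 0 ≤ r → ∀ φ ∈ Icc (θ j) (θ (j + 1)),
        suppFn K (circleMap 0 r φ) + ε / 4 * r ≤ (b j * circleMap 0 r φ).re := by
  obtain ⟨σ, hσ, h⟩ := exists_suppFn_add_le_re hK hne hε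
  choose! B hB hBle using h
  obtain ⟨N, hN⟩ := exists_nat_gt (2 * Real.pi / σ)
  have hN0 : (0 : ℝ) < N := (by positivity : 0 ≤ 2 * Real.pi / σ).trans_lt hN
  set τ : ℝ := 2 * Real.pi / N
  have : 0 ≤ τ := by positivity
  have hτσ : τ ≤ σ := (div_lt_comm₀ hσ hN0).1 hN |>.le
  have hNτ : N * τ = 2 * Real.pi := mul_div_cancel₀ _ hN0.ne'
  have hunit (φ : ℝ) : ‖circleMap 0 1 φ‖ = 1 := by simp
  refine ⟨N, fun j => j * τ, fun j => B (circleMap 0 1 (j * τ)),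
    fun i j hij => by dsimp only; gcongr, by simp, hNτ, ?_, fun j => hB _ (hunit _),
    fun j r hr φ hφ => ?_⟩
  · simp [hNτ, circleMap]
  · have hdist : ‖circleMap 0 1 φ - circleMap 0 1 (j * τ)‖ ≤ σ := by
      have hlip := (lipschitzWith_circleMap 0 1).dist_le_mul φ (j * τ)
      have hφj : φ ≤ j * τ + τ := by simpa [add_mul] using hφ.2
      rw [dist_eq_norm, Real.dist_eq, abs_of_nonneg (sub_nonneg.2 hφ.1), map_one, NNReal.coe_one,
        one_mul] at hlip
      linarith
    have hle := mul_le_mul_of_nonneg_left (hBle _ (hunit _) _ hdist) hr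
    rw [circleMap_zero_eq_mul, suppFn_ofReal_mul hr, mul_left_comm, re_ofReal_mul]
    linarith

end Polygon

lemma exists_one_add_pow_mul_exp_le (k : ℕ) {a : ℝ} (ha : 0 < a) :
    ∃ C, ∀ x : ℝ, 0 ≤ x → (1 + x) ^ k * Real.exp (-(a * x)) ≤ C := by
  refine ⟨k.factorial / a ^ k * Real.exp a, fun x hx => ?_⟩
  have h := Real.pow_div_factorial_le_exp (a * (1 + x)) (by positivity) k
  rw [mul_pow, mul_add, mul_one, Real.exp_add, div_le_iff₀ (by positivity)] at h
  rw [Real.exp_neg, ← div_eq_mul_inv, div_le_iff₀ (Real.exp_pos _), div_mul_eq_mul_div,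
    div_mul_eq_mul_div, le_div_iff₀ (by positivity)]
  linarith

section WeightedSpace

variable {K : Set ℂ} {n : ℕ} {F : ℂ → ℂ} {C : ℝ}

/-- The weight `z ↦ exp (-H_K z - |z| / n)` that defines `expNorm K n`. -/
noncomputable def weight (K : Set ℂ) (n : ℕ) (z : ℂ) : ℝ := Real.exp (-(suppFn K z) - ‖z‖ / n)

/-- The function `F` is bounded with respect to the weight `weight K n`. -/
def WeightBounded (K : Set ℂ) (n : ℕ) (F : ℂ → ℂ) : Prop :=
  BddAbove (range fun z => ‖F z‖ * weight K n z)

open scoped Classical in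
/-- The product of `F` with the weight, as an element of the Banach space `ℓ^∞` of bounded functions
on `ℂ`; it is set to `0` if the product is unbounded. It turns `expNorm K n` into the norm of a
Banach space, in which series and integrals can be formed. -/
noncomputable def toWeighted (K : Set ℂ) (n : ℕ) (F : ℂ → ℂ) : lp (fun _ : ℂ => ℂ) ∞ :=
  if h : Memℓp (fun z => F z * (weight K n z : ℂ)) ∞ then ⟨_, h⟩ else 0

lemma weight_pos (K : Set ℂ) (n : ℕ) (z : ℂ) : 0 < weight K n z := Real.exp_pos _

lemma norm_mul_weight (a z : ℂ) : ‖a * (weight K n z : ℂ)‖ = ‖a‖ * weight K n z := by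
  rw [norm_mul, norm_real, Real.norm_of_nonneg (weight_pos K n z).le]

lemma weightBounded_of_le (h : ∀ z, ‖F z‖ * weight K n z ≤ C) : WeightBounded K n F :=
  ⟨C, forall_mem_range.2 h⟩

lemma toWeighted_apply (h : WeightBounded K n F) (z : ℂ) :
    toWeighted K n F z = F z * (weight K n z : ℂ) := by
  have hmem : Memℓp (fun z => F z * (weight K n z : ℂ)) ∞ :=
    memℓp_infty (by simpa only [norm_mul_weight] using! h)
  rw [toWeighted, dif_pos hmem]

lemma norm_toWeighted_le (h : ∀ z, ‖F z‖ * weight K n z ≤ C) : ‖toWeighted K n F‖ ≤ C := by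
  refine lp.norm_le_of_forall_le' C fun z => ?_
  rw [toWeighted_apply (weightBounded_of_le h), norm_mul_weight]
  exact h z

end WeightedSpace

section ExponentialsInWeightedSpace

variable {K : Set ℂ} {n : ℕ} {k w : ℂ}

lemma norm_exp_mul_weight_le (hK : IsCompact K) (hk : k ∈ K) (w z : ℂ) :
    ‖exp (z * w)‖ * weight K n z ≤ Real.exp (-((1 / n - dist w k) * ‖z‖)) := by
  rw [weight, norm_exp, ← Real.exp_add, Real.exp_le_exp, dist_eq_norm]
  have h : (z * (w - k)).re ≤ ‖z‖ * ‖w - k‖ := (re_le_norm _).trans_eq (norm_mul _ _)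
  rw [mul_sub, sub_re] at h
  have := re_mul_le_suppFn hK z hk
  ring_nf at this h ⊢
  linarith

lemma norm_exp_mul_weight_le_one (hK : IsCompact K) (hw : w ∈ Metric.thickening (1 / (n : ℝ)) K)
    (z : ℂ) : ‖exp (z * w)‖ * weight K n z ≤ 1 := by
  obtain ⟨k, hk, hwk⟩ := Metric.mem_thickening_iff.1 hw
  refine (norm_exp_mul_weight_le hK hk w z).trans (Real.exp_le_one_iff.2 ?_)
  exact neg_nonpos.2 (mul_nonneg (sub_nonneg.2 hwk.le) (norm_nonneg z))

/-- The exponential `z ↦ exp (z * w)` as an element of the weighted space. -/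
noncomputable def weightedExp (K : Set ℂ) (n : ℕ) (w : ℂ) : lp (fun _ : ℂ => ℂ) ∞ :=
  toWeighted K n fun z => exp (z * w)

lemma weightedExp_apply (hK : IsCompact K) (hw : w ∈ Metric.thickening (1 / (n : ℝ)) K) (z : ℂ) :
    weightedExp K n w z = exp (z * w) * (weight K n z : ℂ) :=
  toWeighted_apply (weightBounded_of_le (norm_exp_mul_weight_le_one hK hw)) z

lemma norm_weightedExp_le (hK : IsCompact K) (hw : w ∈ Metric.thickening (1 / (n : ℝ)) K) :
    ‖weightedExp K n w‖ ≤ 1 :=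
  norm_toWeighted_le (norm_exp_mul_weight_le_one hK hw)

lemma norm_exp_remainder_mul_weight_le (hK : IsCompact K) (hk : k ∈ K) {h : ℂ}
    (hh : ‖h‖ ≤ (1 / n - dist w k) / 2) (z : ℂ) :
    ‖exp (z * (w + h)) - exp (z * w) - h * (z * exp (z * w))‖ * weight K n z ≤
      ‖h‖ ^ 2 * (‖z‖ ^ 2 * Real.exp (-((1 / n - dist w k) / 2 * ‖z‖))) := by
  set ρ := 1 / n - dist w k
  have hfactor : exp (z * (w + h)) - exp (z * w) - h * (z * exp (z * w)) =
      (exp (z * h) - 1 - z * h) * exp (z * w) := by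
    rw [mul_add, exp_add]
    ring
  have htaylor : ‖exp (z * h) - 1 - z * h‖ ≤ ‖z * h‖ ^ 2 * Real.exp ‖z * h‖ := by
    simpa [Finset.sum_range_succ, sub_sub] using norm_exp_sub_sum_le_norm_mul_exp (z * h) 2
  have hexp : Real.exp ‖z * h‖ * Real.exp (-(ρ * ‖z‖)) ≤ Real.exp (-(ρ / 2 * ‖z‖)) := by
    rw [← Real.exp_add, Real.exp_le_exp, norm_mul]
    nlinarith [norm_nonneg z]
  rw [hfactor, norm_mul, mul_assoc]
  calc _ ≤ (‖z * h‖ ^ 2 * Real.exp ‖z * h‖) * Real.exp (-(ρ * ‖z‖)) :=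
        mul_le_mul htaylor (norm_exp_mul_weight_le hK hk w z)
          (mul_nonneg (norm_nonneg _) (weight_pos K n z).le) (by positivity)
    _ = ‖h‖ ^ 2 * (‖z‖ ^ 2 * (Real.exp ‖z * h‖ * Real.exp (-(ρ * ‖z‖)))) := by
      rw [norm_mul]
      ring
    _ ≤ _ := by gcongr

lemma weightBounded_mul_exp (hK : IsCompact K) (hw : w ∈ Metric.thickening (1 / (n : ℝ)) K) :
    WeightBounded K n fun z => z * exp (z * w) := by
  obtain ⟨k, hk, hwk⟩ := Metric.mem_thickening_iff.1 hw
  obtain ⟨C, hC⟩ := exists_one_add_pow_mul_exp_le 1 (sub_pos.2 hwk)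
  refine weightBounded_of_le (C := C) fun z => ?_
  rw [norm_mul, mul_assoc]
  refine (mul_le_mul ?_ (norm_exp_mul_weight_le hK hk w z) ?_ ?_).trans (hC ‖z‖ (norm_nonneg z))
  · simp
  · exact mul_nonneg (norm_nonneg _) (weight_pos K n z).le
  · positivity

lemma hasDerivAt_weightedExp (hK : IsCompact K) (hw : w ∈ Metric.thickening (1 / (n : ℝ)) K) :
    HasDerivAt (weightedExp K n) (toWeighted K n fun z => z * exp (z * w)) w := by
  obtain ⟨k, hk, hwk⟩ := Metric.mem_thickening_iff.1 hw
  have hρ : 0 < (1 / n - dist w k) / 2 := half_pos (sub_pos.2 hwk)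
  obtain ⟨C, hC⟩ := exists_one_add_pow_mul_exp_le 2 hρ
  have hO : (fun h => weightedExp K n (w + h) - weightedExp K n w -
      h • toWeighted K n fun z => z * exp (z * w)) =O[𝓝 0] fun h : ℂ => h ^ 2 := by
    refine Asymptotics.IsBigO.of_bound C ?_
    filter_upwards [Metric.ball_mem_nhds (0 : ℂ) hρ,
      (Metric.isOpen_thickening.preimage (continuous_const_add w)).mem_nhds
        (by rwa [mem_preimage, add_zero])] with h hh hwh
    refine lp.norm_le_of_forall_le' _ fun z => ?_
    have happly : (weightedExp K n (w + h) - weightedExp K n w -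
        h • toWeighted K n fun z => z * exp (z * w)) z =
        (exp (z * (w + h)) - exp (z * w) - h * (z * exp (z * w))) * (weight K n z : ℂ) := by
      simp only [lp.coeFn_sub, lp.coeFn_smul, Pi.sub_apply, Pi.smul_apply, smul_eq_mul,
        weightedExp_apply hK hw, weightedExp_apply hK hwh,
        toWeighted_apply (weightBounded_mul_exp hK hw)]
      ring
    rw [happly, norm_mul_weight]
    calc _ ≤ ‖h‖ ^ 2 * (‖z‖ ^ 2 * Real.exp (-((1 / n - dist w k) / 2 * ‖z‖))) :=
          norm_exp_remainder_mul_weight_le hK hk (mem_ball_zero_iff.1 hh).le z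
      _ ≤ ‖h‖ ^ 2 * C := by
        gcongr
        refine le_trans ?_ (hC ‖z‖ (norm_nonneg z))
        gcongr
        simp
      _ = C * ‖h ^ 2‖ := by rw [norm_pow, mul_comm]
  rw [hasDerivAt_iff_isLittleO_nhds_zero]
  exact hO.trans_isLittleO (by simpa using Asymptotics.isLittleO_pow_id (𝕜 := ℂ) one_lt_two)

lemma differentiableOn_weightedExp (hK : IsCompact K) (n : ℕ) :
    DifferentiableOn ℂ (weightedExp K n) (Metric.thickening (1 / (n : ℝ)) K) :=
  fun _ hw => (hasDerivAt_weightedExp hK hw).differentiableAt.differentiableWithinAt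

end ExponentialsInWeightedSpace

section SegmentMean

variable {K : Set ℂ} {n : ℕ} {b b' : ℂ}

/-- The affine path from `b` at time `0` to `b'` at time `1`, constant outside `[0, 1]`. -/
noncomputable def segmentPath (b b' : ℂ) (t : ℝ) : ℂ :=
  AffineMap.lineMap b b' (projIcc (0 : ℝ) 1 zero_le_one t : ℝ)

/-- The mean over `w` in the segment from `b` to `b'` of the weighted exponentials
`z ↦ exp (w * (z - ζ))`. -/
noncomputable def weightedExpMean (K : Set ℂ) (n : ℕ) (b b' ζ : ℂ) : lp (fun _ : ℂ => ℂ) ∞ :=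
  ∫ t in (0 : ℝ)..1, exp (-(segmentPath b b' t * ζ)) • weightedExp K n (segmentPath b b' t)

lemma continuous_segmentPath (b b' : ℂ) : Continuous (segmentPath b b') :=
  AffineMap.lineMap_continuous.comp (continuous_subtype_val.comp continuous_projIcc)

lemma segmentPath_mem_segment (b b' : ℂ) (t : ℝ) : segmentPath b b' t ∈ segment ℝ b b' :=
  lineMap_mem_segment ℝ b b' (projIcc (0 : ℝ) 1 zero_le_one t).2

lemma continuous_exp_smul_weightedExp_segmentPath (hK : IsCompact K)
    (hbK : segment ℝ b b' ⊆ Metric.thickening (1 / (n : ℝ)) K) :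
    Continuous (Function.uncurry fun (ζ : ℂ) (t : ℝ) =>
      exp (-(segmentPath b b' t * ζ)) • weightedExp K n (segmentPath b b' t)) := by
  have hpath := continuous_segmentPath b b'
  have hexp : Continuous fun t => weightedExp K n (segmentPath b b' t) :=
    (differentiableOn_weightedExp hK n).continuousOn.comp_continuous hpath
      fun t => hbK (segmentPath_mem_segment b b' t)
  exact ((hpath.comp continuous_snd).mul continuous_fst).neg.cexp.smul (hexp.comp continuous_snd)

lemma continuous_weightedExpMean (hK : IsCompact K)
    (hbK : segment ℝ b b' ⊆ Metric.thickening (1 / (n : ℝ)) K) :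
    Continuous (weightedExpMean K n b b') :=
  intervalIntegral.continuous_parametric_intervalIntegral_of_continuous'
    (continuous_exp_smul_weightedExp_segmentPath hK hbK) 0 1

lemma map_weightedExpMean {F : Type*} [NormedAddCommGroup F] [NormedSpace ℂ F] [CompleteSpace F]
    (hK : IsCompact K) (hbK : segment ℝ b b' ⊆ Metric.thickening (1 / (n : ℝ)) K)
    (L : lp (fun _ : ℂ => ℂ) ∞ →L[ℂ] F) (ζ : ℂ) :
    L (weightedExpMean K n b b' ζ) = ∫ t in (0 : ℝ)..1,
      exp (-(segmentPath b b' t * ζ)) • L (weightedExp K n (segmentPath b b' t)) := by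
  simp only [weightedExpMean, ← map_smul]
  exact (L.intervalIntegral_comp_comm (((continuous_exp_smul_weightedExp_segmentPath hK hbK).comp
    (Continuous.prodMk_right ζ)).intervalIntegrable _ _)).symm

lemma weightedExpMean_apply (hK : IsCompact K)
    (hbK : segment ℝ b b' ⊆ Metric.thickening (1 / (n : ℝ)) K) (ζ z : ℂ) :
    weightedExpMean K n b b' ζ z =
      (∫ t in (0 : ℝ)..1, exp (-(AffineMap.lineMap b b' t * (ζ - z)))) * (weight K n z : ℂ) := by
  refine (map_weightedExpMean hK hbK (lp.evalCLM ℂ (fun _ : ℂ => ℂ) ∞ z) ζ).trans ?_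
  rw [← intervalIntegral.integral_mul_const]
  refine intervalIntegral.integral_congr fun t ht => ?_
  rw [uIcc_of_le zero_le_one] at ht
  change exp _ • weightedExp K n _ z = _
  rw [weightedExp_apply hK (hbK (segmentPath_mem_segment b b' t)), segmentPath,
    projIcc_of_mem _ ht, smul_eq_mul, ← mul_assoc, ← exp_add]
  ring_nf

lemma norm_smul_weightedExpMean_le (hK : IsCompact K)
    (hbK : segment ℝ b b' ⊆ Metric.thickening (1 / (n : ℝ)) K) {a ζ : ℂ} {B : ℝ}
    (h : ∀ w ∈ segment ℝ b b', ‖a * exp (-(w * ζ))‖ ≤ B) :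
    ‖a • weightedExpMean K n b b' ζ‖ ≤ B := by
  have hmean : a • weightedExpMean K n b b' ζ = ∫ t in (0 : ℝ)..1,
      (a * exp (-(segmentPath b b' t * ζ))) • weightedExp K n (segmentPath b b' t) := by
    simp only [weightedExpMean, ← intervalIntegral.integral_smul, mul_smul]
  rw [hmean]
  refine (intervalIntegral.norm_integral_le_of_norm_le_const (C := B) fun t _ => ?_).trans_eq
    (by simp)
  have ht := segmentPath_mem_segment b b' t
  rw [norm_smul]
  exact (mul_le_of_le_one_right (norm_nonneg _) (norm_weightedExp_le hK (hbK ht))).trans (h _ ht)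

end SegmentMean

section RayIntegral

variable {K : Set ℂ} {n : ℕ} {g : ℂ → ℂ} {b b' : ℂ} {θ : ℝ}

/-- The density along the ray of angle `θ` of the difference of the contour integrals of
`dampedSlope g z b'` and `dampedSlope g z b`, as an element of the weighted space of functions
of `z`. -/
noncomputable def rayDensity (K : Set ℂ) (n : ℕ) (g : ℂ → ℂ) (b b' : ℂ) (θ r : ℝ) :
    lp (fun _ : ℂ => ℂ) ∞ :=
  (exp (θ * I) * (b - b')) •
    g (circleMap 0 r θ) • weightedExpMean K n b b' (circleMap 0 r θ)

lemma continuous_rayDensity (hK : IsCompact K)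
    (hbK : segment ℝ b b' ⊆ Metric.thickening (1 / (n : ℝ)) K) (hg : Continuous g) (θ : ℝ) :
    Continuous (rayDensity K n g b b' θ) := by
  have hmean := continuous_weightedExpMean hK hbK
  have := continuous_circleMap_radius θ
  unfold rayDensity
  fun_prop

lemma integral_rayDensity_apply (hK : IsCompact K)
    (hbK : segment ℝ b b' ⊆ Metric.thickening (1 / (n : ℝ)) K) (hg : Differentiable ℂ g)
    (R : ℝ) (z : ℂ) :
    (∫ r in (0 : ℝ)..R, rayDensity K n g b b' θ r) z =
      (rayIntegral (dampedSlope g z b') θ R - rayIntegral (dampedSlope g z b) θ R) *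
        (weight K n z : ℂ) := by
  have hslope (w : ℂ) : Continuous fun r => exp (θ * I) * dampedSlope g z w (circleMap 0 r θ) :=
    ((differentiable_dampedSlope hg z w).continuous.comp
      (continuous_circleMap_radius θ)).const_mul _
  refine ((lp.evalCLM ℂ (fun _ : ℂ => ℂ) ∞ z).intervalIntegral_comp_comm
    ((continuous_rayDensity hK hbK hg.continuous θ).intervalIntegrable 0 R)).symm.trans ?_
  rw [rayIntegral, rayIntegral,
    ← intervalIntegral.integral_sub ((hslope b').intervalIntegrable _ _)
      ((hslope b).intervalIntegrable _ _), ← intervalIntegral.integral_mul_const]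
  refine intervalIntegral.integral_congr fun r _ => ?_
  change (exp (θ * I) * (b - b')) • g _ • weightedExpMean K n b b' _ z = _
  rw [weightedExpMean_apply hK hbK, smul_eq_mul, smul_eq_mul, ← mul_sub,
    dampedSlope_sub_dampedSlope hg]
  ring

lemma integrableOn_rayDensity (hK : IsCompact K)
    (hbK : segment ℝ b b' ⊆ Metric.thickening (1 / (n : ℝ)) K) (hg : Continuous g)
    {C η : ℝ} (hη : 0 < η)
    (hbd : ∀ r, 0 ≤ r → ∀ w ∈ segment ℝ b b',
      ‖g (circleMap 0 r θ) * exp (-(w * circleMap 0 r θ))‖ ≤ C * Real.exp (-(η * r))) :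
    MeasureTheory.IntegrableOn (rayDensity K n g b b' θ) (Ioi 0) := by
  refine MeasureTheory.Integrable.mono'
    (((exp_neg_integrableOn_Ioi 0 hη).const_mul C).const_mul ‖exp (θ * I) * (b - b')‖)
    (continuous_rayDensity hK hbK hg θ).aestronglyMeasurable ?_
  filter_upwards [MeasureTheory.ae_restrict_mem measurableSet_Ioi] with r hr
  rw [rayDensity, norm_smul, neg_mul]
  gcongr
  exact norm_smul_weightedExpMean_le hK hbK (hbd r (le_of_lt hr))

lemma map_integral_rayDensity_eq_zero {F : Type*} [NormedAddCommGroup F] [NormedSpace ℂ F]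
    [CompleteSpace F] (L : lp (fun _ : ℂ => ℂ) ∞ →L[ℂ] F) (hK : IsCompact K)
    (hbK : segment ℝ b b' ⊆ Metric.thickening (1 / (n : ℝ)) K)
    (hL : ∀ w ∈ Metric.thickening (1 / (n : ℝ)) K, L (weightedExp K n w) = 0)
    (hint : MeasureTheory.IntegrableOn (rayDensity K n g b b' θ) (Ioi 0)) :
    L (∫ r in Ioi 0, rayDensity K n g b b' θ r) = 0 := by
  rw [← L.integral_comp_comm hint]
  have hmean (ζ : ℂ) : L (weightedExpMean K n b b' ζ) = 0 := by
    simp [map_weightedExpMean hK hbK, hL _ (hbK (segmentPath_mem_segment b b' _))]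
  simp only [rayDensity, map_smul, hmean, smul_zero, MeasureTheory.integral_zero]

end RayIntegral

section ExponentialsTotal

variable {K : Set ℂ} {n : ℕ} {g : ℂ → ℂ}

lemma weightBounded_of_memExp (hg : MemExp K g) (hn : 0 < n) : WeightBounded K n g := hg.2 n hn

lemma exists_norm_mul_exp_neg_le (hg : MemExp K g) {δ : ℝ} (hδ : 0 < δ) :
    ∃ C η, 0 < η ∧ ∀ ζ w : ℂ, suppFn K ζ + δ * ‖ζ‖ ≤ (w * ζ).re →
      ‖g ζ * exp (-(w * ζ))‖ ≤ C * Real.exp (-(η * ‖ζ‖)) := by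
  obtain ⟨m, hm⟩ := exists_nat_one_div_lt hδ
  obtain ⟨C, hC⟩ := hg.2 (m + 1) m.succ_pos
  refine ⟨C, δ - 1 / ((m : ℝ) + 1), sub_pos.2 hm, fun ζ w hζ => ?_⟩
  have hbd : ‖g ζ‖ * weight K (m + 1) ζ ≤ C := hC ⟨ζ, rfl⟩
  have hexp : Real.exp (-(w * ζ)).re ≤
      weight K (m + 1) ζ * Real.exp (-((δ - 1 / ((m : ℝ) + 1)) * ‖ζ‖)) := by
    rw [weight, ← Real.exp_add, Real.exp_le_exp, neg_re]
    push_cast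
    ring_nf at hζ ⊢
    linarith
  calc _ = ‖g ζ‖ * Real.exp (-(w * ζ)).re := by rw [norm_mul, norm_exp]
    _ ≤ ‖g ζ‖ * (weight K (m + 1) ζ * Real.exp (-((δ - 1 / ((m : ℝ) + 1)) * ‖ζ‖))) := by gcongr
    _ ≤ _ := by
      rw [← mul_assoc]
      gcongr

lemma le_re_mul_of_mem_segment {b b' ζ w : ℂ} {c : ℝ} (hb : c ≤ (b * ζ).re)
    (hb' : c ≤ (b' * ζ).re) (hw : w ∈ segment ℝ b b') : c ≤ (w * ζ).re := by
  have hlin : IsLinearMap ℝ fun w : ℂ => (w * ζ).re :=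
    ⟨fun x y => by rw [add_mul, add_re], fun a x => by rw [smul_mul_assoc, smul_re]⟩
  exact (convex_halfSpace_ge hlin c).segment_subset hb hb' hw

lemma sum_integral_rayDensity (hK : IsCompact K) (hgn : WeightBounded K n g)
    (hg : Differentiable ℂ g) {N : ℕ} {θ : ℕ → ℝ} {b : ℕ → ℂ} (hθ : Monotone θ) (hθ0 : θ 0 = 0)
    (hθN : θ N = 2 * Real.pi) (hb : b N = b 0)
    (hbK : ∀ j, segment ℝ (b j) (b (j + 1)) ⊆ Metric.thickening (1 / (n : ℝ)) K)
    {C η : ℝ} (hη : 0 < η)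
    (hbd : ∀ j r, 0 ≤ r → ∀ φ ∈ Icc (θ j) (θ (j + 1)),
      ‖g (circleMap 0 r φ) * exp (-(b j * circleMap 0 r φ))‖ ≤ C * Real.exp (-(η * r)))
    (hint : ∀ j, MeasureTheory.IntegrableOn
      (rayDensity K n g (b j) (b (j + 1)) (θ (j + 1))) (Ioi 0)) :
    ∑ j ∈ Finset.range N, ∫ r in Ioi 0, rayDensity K n g (b j) (b (j + 1)) (θ (j + 1)) r =
      (2 * Real.pi * I : ℂ) • toWeighted K n g := by
  refine lp.ext (funext fun z => ?_)
  have hlim := (lp.evalCLM ℂ (fun _ : ℂ => ℂ) ∞ z).continuous.continuousAt.tendsto.comp <|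
    tendsto_finsetSum (Finset.range N) fun j _ =>
      MeasureTheory.intervalIntegral_tendsto_integral_Ioi 0 (hint j) tendsto_id
  refine tendsto_nhds_unique hlim ?_
  rw [lp.coeFn_smul, Pi.smul_apply, toWeighted_apply hgn, smul_eq_mul, ← mul_assoc]
  refine ((tendsto_sum_rayIntegral_dampedSlope_sub hg hb hθ hθ0 hθN hη hbd z).mul_const
    (weight K n z : ℂ)).congr fun R => ?_
  rw [Finset.sum_mul, Function.comp_apply, map_sum]
  exact Finset.sum_congr rfl fun j _ => (integral_rayDensity_apply hK (hbK j) hg R z).symm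

theorem map_toWeighted_eq_zero {F : Type*} [NormedAddCommGroup F] [NormedSpace ℂ F]
    [CompleteSpace F] (L : lp (fun _ : ℂ => ℂ) ∞ →L[ℂ] F) (hK : IsCompact K) (hne : K.Nonempty)
    (hconv : Convex ℝ K) (hn : 0 < n)
    (hL : ∀ w ∈ Metric.thickening (1 / (n : ℝ)) K, L (weightedExp K n w) = 0)
    (hg : MemExp K g) : L (toWeighted K n g) = 0 := by
  have hε : 0 < 1 / (n : ℝ) := by positivity
  obtain ⟨N, θ, b, hθ, hθ0, hθN, hb, hbK, hsupp⟩ := exists_polygon_suppFn_add_le_re hK hne hε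
  obtain ⟨C, η, hη, hdecay⟩ := exists_norm_mul_exp_neg_le hg (by positivity : 0 < 1 / (n : ℝ) / 4)
  replace hdecay (w : ℂ) {r : ℝ} (hr : 0 ≤ r) (φ : ℝ) (h : suppFn K (circleMap 0 r φ) +
      1 / (n : ℝ) / 4 * r ≤ (w * circleMap 0 r φ).re) :
      ‖g (circleMap 0 r φ) * exp (-(w * circleMap 0 r φ))‖ ≤ C * Real.exp (-(η * r)) := by
    simpa [abs_of_nonneg hr] using hdecay (circleMap 0 r φ) w (by simpa [abs_of_nonneg hr] using h)
  have hbK' (j : ℕ) : segment ℝ (b j) (b (j + 1)) ⊆ Metric.thickening (1 / (n : ℝ)) K :=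
    (hconv.thickening _).segment_subset (hbK j) (hbK (j + 1))
  have hint (j : ℕ) : MeasureTheory.IntegrableOn
      (rayDensity K n g (b j) (b (j + 1)) (θ (j + 1))) (Ioi 0) := by
    refine integrableOn_rayDensity hK (hbK' j) hg.1.continuous hη fun r hr w hw => hdecay w hr _ ?_
    exact le_re_mul_of_mem_segment (hsupp j r hr _ ⟨hθ j.le_succ, le_rfl⟩)
      (hsupp (j + 1) r hr _ ⟨le_rfl, hθ (j + 1).le_succ⟩) hw
  have hsum := congrArg L <| sum_integral_rayDensity hK (weightBounded_of_memExp hg hn) hg.1 hθ hθ0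
    hθN hb hbK' hη (fun j r hr φ hφ => hdecay (b j) hr φ (hsupp j r hr φ hφ)) hint
  rw [map_sum, map_smul, Finset.sum_eq_zero fun j _ =>
    map_integral_rayDensity_eq_zero L hK (hbK' j) hL (hint j)] at hsum
  exact (smul_eq_zero.1 hsum.symm).resolve_left two_pi_I_ne_zero

end ExponentialsTotal

section DampedSeq

variable {K : Set ℂ} {n : ℕ} {u v a d : ℂ} {g : ℂ → ℂ}

theorem toWeighted_mem_of_frequently_weightedExp_mem (S : Submodule ℂ (lp (fun _ : ℂ => ℂ) ∞))
    [IsClosed (S : Set (lp (fun _ : ℂ => ℂ) ∞))] (hK : IsCompact K) (hconv : Convex ℝ K)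
    (hn : 0 < n) (hu : u ∈ K) (hS : ∃ᶠ w in 𝓝[≠] u, weightedExp K n w ∈ S) (hg : MemExp K g) :
    toWeighted K n g ∈ S := by
  have hε : 0 < 1 / (n : ℝ) := by positivity
  have hanalytic : AnalyticOnNhd ℂ (fun w => S.mkQL (weightedExp K n w))
      (Metric.thickening (1 / (n : ℝ)) K) :=
    (S.mkQL.differentiable.comp_differentiableOn
      (differentiableOn_weightedExp hK n)).analyticOnNhd Metric.isOpen_thickening
  have hzero : EqOn (fun w => S.mkQL (weightedExp K n w)) 0 (Metric.thickening (1 / (n : ℝ)) K) :=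
    hanalytic.eqOn_zero_of_preconnected_of_frequently_eq_zero (hconv.thickening _).isPreconnected
      (Metric.self_subset_thickening hε K hu)
      (hS.mono fun w hw => (Submodule.Quotient.mk_eq_zero S).2 hw)
  exact (Submodule.Quotient.mk_eq_zero S).1
    (map_toWeighted_eq_zero S.mkQL hK ⟨u, hu⟩ hconv hn (fun w hw => hzero hw) hg)

lemma norm_mul_weight_le_of_norm_le (hn : 0 < n) {C : ℝ} {F : ℂ → ℂ} {z : ℂ}
    (hC : 0 ≤ C) (h : ‖F z‖ ≤ C * ‖z‖ * Real.exp (suppFn K z)) : ‖F z‖ * weight K n z ≤ C * n := by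
  have hx : ‖z‖ * Real.exp (-(‖z‖ / n)) ≤ n := by
    have := Real.add_one_le_exp (‖z‖ / n)
    have hn' : (0 : ℝ) < n := Nat.cast_pos.2 hn
    rw [Real.exp_neg, ← div_eq_mul_inv, div_le_iff₀ (Real.exp_pos _), ← div_le_iff₀' hn']
    linarith
  calc _ ≤ C * ‖z‖ * Real.exp (suppFn K z) * weight K n z :=
        mul_le_mul_of_nonneg_right h (weight_pos K n z).le
    _ = C * (‖z‖ * Real.exp (-(‖z‖ / n))) := by
      rw [weight, mul_assoc, ← Real.exp_add]
      ring_nf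
    _ ≤ C * n := by gcongr

lemma weightBounded_dampedExp (hK : IsCompact K) (ha : a ∈ K) (hd : a + 4 * d ∈ K) :
    WeightBounded K n (dampedExp a d) := by
  refine weightBounded_of_le (C := 1) fun z => ?_
  calc _ ≤ Real.exp (suppFn K z) * weight K n z :=
        mul_le_mul_of_nonneg_right (norm_dampedExp_le hK ha hd z) (weight_pos K n z).le
    _ ≤ 1 := by
      rw [weight, ← Real.exp_add, Real.exp_le_one_iff]
      have : 0 ≤ ‖z‖ / n := by positivity
      linarith

lemma norm_toWeighted_dampedExp_sub_le (hK : IsCompact K) (hn : 0 < n) (ha : a ∈ K)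
    (hd : a + 4 * d ∈ K) :
    ‖toWeighted K n (dampedExp a d) - weightedExp K n a‖ ≤ 4 * ‖d‖ * n := by
  have haK : a ∈ Metric.thickening (1 / (n : ℝ)) K :=
    Metric.self_subset_thickening (by positivity) K ha
  refine lp.norm_le_of_forall_le' _ fun z => ?_
  rw [lp.coeFn_sub, Pi.sub_apply, toWeighted_apply (weightBounded_dampedExp hK ha hd),
    weightedExp_apply hK haK, ← sub_mul, norm_mul_weight]
  exact norm_mul_weight_le_of_norm_le (F := fun z => dampedExp a d z - exp (z * a)) hn
    (by positivity) (norm_dampedExp_sub_exp_le hK ha hd z)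

lemma weightedExp_mem_of_tendsto (S : Submodule ℂ (lp (fun _ : ℂ => ℂ) ∞))
    [IsClosed (S : Set (lp (fun _ : ℂ => ℂ) ∞))] (hK : IsCompact K) (hn : 0 < n) {d : ℕ → ℂ}
    (hd : Tendsto d atTop (𝓝 0)) (ha : a ∈ K) (had : ∀ j, a + 4 * d j ∈ K)
    (hS : ∀ j, toWeighted K n (dampedExp a (d j)) ∈ S) : weightedExp K n a ∈ S := by
  refine IsClosed.mem_of_tendsto (f := fun j => toWeighted K n (dampedExp a (d j))) (b := atTop)
    inferInstance (tendsto_iff_norm_sub_tendsto_zero.2 ?_) (Eventually.of_forall hS)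
  refine squeeze_zero (fun _ => norm_nonneg _)
    (fun j => norm_toWeighted_dampedExp_sub_le hK hn ha (had j)) ?_
  simpa using (hd.norm.const_mul 4).mul_const (n : ℝ)

/-- An enumeration, through the pairing function, of damped exponentials whose exponents form a
sequence in the segment from `u` to `v` that converges to `u`, with damping parameters converging
to `0`. -/
noncomputable def dampedSeq (u v : ℂ) (k : ℕ) : ℂ → ℂ :=
  dampedExp (AffineMap.lineMap u v (1 / (2 * (k.unpair.1 + 1)) : ℝ))
    ((1 / (8 * (k.unpair.2 + 1)) : ℝ) * (v - u))

lemma lineMap_half_mem_segment (u v : ℂ) (i : ℕ) :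
    AffineMap.lineMap u v (1 / (2 * (i + 1)) : ℝ) ∈ segment ℝ u v := by
  refine lineMap_mem_segment ℝ u v ⟨by positivity, ?_⟩
  rw [div_le_one (by positivity)]
  linarith [i.cast_nonneg (α := ℝ)]

lemma lineMap_add_mem_segment (u v : ℂ) (i j : ℕ) :
    AffineMap.lineMap u v (1 / (2 * (i + 1)) : ℝ) + 4 * ((1 / (8 * (j + 1)) : ℝ) * (v - u)) ∈
      segment ℝ u v := by
  have hsum : AffineMap.lineMap u v (1 / (2 * (i + 1)) : ℝ) +
      4 * ((1 / (8 * (j + 1)) : ℝ) * (v - u)) =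
      AffineMap.lineMap u v ((1 / (i + 1) + 1 / (j + 1)) / 2 : ℝ) := by
    have hi : (i : ℂ) + 1 ≠ 0 := i.cast_add_one_ne_zero
    have hj : (j : ℂ) + 1 ≠ 0 := j.cast_add_one_ne_zero
    simp only [AffineMap.lineMap_apply_module', real_smul]
    push_cast
    field_simp
    ring
  have hle (m : ℕ) : 1 / ((m : ℝ) + 1) ≤ 1 :=
    div_le_one_of_le₀ (by linarith [m.cast_nonneg (α := ℝ)]) (by positivity)
  rw [hsum]
  exact lineMap_mem_segment ℝ u v ⟨by positivity, by linarith [hle i, hle j]⟩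

lemma isCompact_segment (u v : ℂ) : IsCompact (segment ℝ u v) := by
  rw [segment_eq_image_lineMap]
  exact isCompact_Icc.image AffineMap.lineMap_continuous

lemma norm_dampedSeq_le (huv : u ≠ v) (k : ℕ) :
    ∃ B, 0 ≤ B ∧ ∀ z,
      ‖dampedSeq u v k z‖ ≤ B * (Real.exp (suppFn (segment ℝ u v) z) / (1 + ‖z‖) ^ 4) := by
  refine ⟨_, by positivity, fun z => (norm_dampedExp_le_div (isCompact_segment u v)
    (lineMap_half_mem_segment u v _) (lineMap_add_mem_segment u v _ _) ?_ z).trans_eq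
    (mul_div_assoc _ _ _)⟩
  exact mul_ne_zero (ofReal_ne_zero.2 (by positivity)) (sub_ne_zero.2 huv.symm)

theorem toWeighted_mem_closure_span_dampedSeq (hK : IsCompact K) (hconv : Convex ℝ K)
    (hn : 0 < n) (hu : u ∈ K) (hv : v ∈ K) (huv : u ≠ v) (hg : MemExp K g) :
    toWeighted K n g ∈
      (Submodule.span ℂ (range fun k => toWeighted K n (dampedSeq u v k))).topologicalClosure := by
  set S := (Submodule.span ℂ (range fun k => toWeighted K n (dampedSeq u v k))).topologicalClosure
  have : IsClosed (S : Set (lp (fun _ : ℂ => ℂ) ∞)) := Submodule.isClosed_topologicalClosure _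
  have hseg : segment ℝ u v ⊆ K := hconv.segment_subset hu hv
  have hlim : Tendsto (fun m : ℕ => 1 / ((m : ℝ) + 1)) atTop (𝓝 0) :=
    tendsto_one_div_add_atTop_nhds_zero_nat
  have hmem (i : ℕ) : weightedExp K n (AffineMap.lineMap u v (1 / (2 * (i + 1)) : ℝ)) ∈ S := by
    refine weightedExp_mem_of_tendsto S hK hn (d := fun j => (1 / (8 * (j + 1)) : ℝ) * (v - u)) ?_
      (hseg (lineMap_half_mem_segment u v i)) (fun j => hseg (lineMap_add_mem_segment u v i j))
      fun j => Submodule.le_topologicalClosure _ (Submodule.subset_span ⟨Nat.pair i j, ?_⟩)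
    · have := ((continuous_ofReal.tendsto _).comp (hlim.const_mul (1 / 8))).mul_const (v - u)
      simpa [div_eq_mul_inv, mul_comm] using this
    · simp only [dampedSeq, Nat.unpair_pair]
  refine toWeighted_mem_of_frequently_weightedExp_mem S hK hconv hn hu ?_ hg
  have hpt : Tendsto (fun i : ℕ => AffineMap.lineMap u v (1 / (2 * (i + 1)) : ℝ)) atTop
      (𝓝[≠] u) := by
    refine tendsto_nhdsWithin_iff.2 ⟨?_, Eventually.of_forall fun i => ?_⟩
    · have := (AffineMap.lineMap_continuous (p := u) (q := v) (R := ℝ)).tendsto (1 / 2 * 0) |>.comp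
        (hlim.const_mul (1 / 2))
      simpa [Function.comp_def, div_eq_mul_inv, mul_comm] using this
    · have : (1 / (2 * (i + 1)) : ℝ) ≠ 0 := by positivity
      simpa [AffineMap.lineMap_eq_left_iff, huv] using this
  exact hpt.frequently (Frequently.of_forall hmem)

end DampedSeq

section DenseSequence

lemma exists_sum_denseSeq_smul_mem {E : Type*} [AddCommMonoid E] [Module ℂ E] [TopologicalSpace E]
    [ContinuousAdd E] [ContinuousSMul ℂ E] {x : ℕ → E} {U : Set E} (hU : IsOpen U) {y : E}
    (hyU : y ∈ U) (hy : y ∈ Submodule.span ℂ (range x)) :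
    ∃ N j : ℕ, ∑ k ∈ Finset.range N, TopologicalSpace.denseSeq (ℕ → ℂ) j k • x k ∈ U := by
  obtain ⟨c, rfl⟩ := Finsupp.mem_span_range_iff_exists_finsupp.1 hy
  obtain ⟨N, hN⟩ := c.support.exists_nat_subset_range
  rw [Finsupp.sum_of_support_subset c hN (fun k a => a • x k) fun _ _ => zero_smul ℂ _] at hyU
  have hcont : Continuous fun a : ℕ → ℂ => ∑ k ∈ Finset.range N, a k • x k := by fun_prop
  exact ⟨N, (TopologicalSpace.denseRange_denseSeq (ℕ → ℂ)).exists_mem_open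
    (hU.preimage hcont) ⟨c, hyU⟩⟩

lemma exists_frequently_eq_of_slow {B : ℕ → ℝ} (hB : B 0 ≤ 1) :
    ∃ ψ : ℕ → ℕ, (∀ s, B (ψ s) ≤ s + 1) ∧ ∀ m, ∃ᶠ s in atTop, ψ s = m := by
  refine ⟨fun s => if B s.unpair.1 ≤ s + 1 then s.unpair.1 else 0, fun s => ?_, fun m => ?_⟩
  · dsimp only
    split_ifs with h
    · exact h
    · exact hB.trans (le_add_of_nonneg_left s.cast_nonneg)
  · refine frequently_atTop.2 fun a => ⟨Nat.pair m (max a ⌈B m⌉₊),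
      (le_max_left _ _).trans (Nat.right_le_pair _ _), ?_⟩
    have hm : B m ≤ (Nat.pair m (max a ⌈B m⌉₊) : ℝ) :=
      (Nat.le_ceil _).trans (Nat.cast_le.2 ((le_max_right _ _).trans (Nat.right_le_pair _ _)))
    simp [hm.trans (le_add_of_nonneg_right zero_le_one)]

variable {K : Set ℂ} {u v : ℂ}

/-- The linear combinations of the functions `dampedSeq u v k` with coefficients from a fixed
dense sequence of `ℕ → ℂ`, enumerated through the pairing function. -/
noncomputable def dampedComb (u v : ℂ) (m : ℕ) (z : ℂ) : ℂ :=
  ∑ k ∈ Finset.range m.unpair.1,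
    TopologicalSpace.denseSeq (ℕ → ℂ) m.unpair.2 k * dampedSeq u v k z

lemma differentiable_dampedComb (u v : ℂ) (m : ℕ) : Differentiable ℂ (dampedComb u v m) :=
  Differentiable.fun_sum fun _ _ => (differentiable_dampedExp _ _).const_mul _

lemma exists_norm_dampedComb_le (huv : u ≠ v) :
    ∃ B : ℕ → ℝ, B 0 = 0 ∧ ∀ m z,
      ‖dampedComb u v m z‖ ≤ B m * (Real.exp (suppFn (segment ℝ u v) z) / (1 + ‖z‖) ^ 4) := by
  choose B _ hB using norm_dampedSeq_le huv
  refine ⟨fun m => ∑ k ∈ Finset.range m.unpair.1,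
    ‖TopologicalSpace.denseSeq (ℕ → ℂ) m.unpair.2 k‖ * B k, by simp, fun m z => ?_⟩
  rw [dampedComb, Finset.sum_mul]
  refine norm_sum_le_of_le _ fun k _ => ?_
  rw [norm_mul, mul_assoc]
  gcongr
  exact hB k z

lemma exists_norm_dampedComb_sub_mul_weight_le (hK : IsCompact K) (hconv : Convex ℝ K) (hu : u ∈ K)
    (hv : v ∈ K) (huv : u ≠ v) {g : ℂ → ℂ} (hg : MemExp K g) {n : ℕ} (hn : 0 < n) {ε : ℝ}
    (hε : 0 < ε) : ∃ m, ∀ z, ‖dampedComb u v m z - g z‖ * weight K n z ≤ ε := by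
  have hseg : segment ℝ u v ⊆ K := hconv.segment_subset hu hv
  obtain ⟨y, hy, hys⟩ := mem_closure_iff.1
    (toWeighted_mem_closure_span_dampedSeq hK hconv hn hu hv huv hg) _ Metric.isOpen_ball
    (Metric.mem_ball_self hε)
  obtain ⟨N, j, hNj⟩ := exists_sum_denseSeq_smul_mem Metric.isOpen_ball hy hys
  refine ⟨Nat.pair N j, fun z => ?_⟩
  have hdamped (k : ℕ) : WeightBounded K n (dampedSeq u v k) := weightBounded_dampedExp hK
    (hseg (lineMap_half_mem_segment u v _)) (hseg (lineMap_add_mem_segment u v _ _))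
  have happly : (∑ k ∈ Finset.range N, TopologicalSpace.denseSeq (ℕ → ℂ) j k •
      toWeighted K n (dampedSeq u v k) - toWeighted K n g) z =
      (dampedComb u v (Nat.pair N j) z - g z) * (weight K n z : ℂ) := by
    simp only [lp.coeFn_sub, lp.coeFn_sum, lp.coeFn_smul, Pi.sub_apply, Finset.sum_apply,
      Pi.smul_apply, smul_eq_mul, toWeighted_apply (hdamped _),
      toWeighted_apply (weightBounded_of_memExp hg hn), dampedComb, Nat.unpair_pair, sub_mul,
      Finset.sum_mul, mul_assoc]
  rw [← norm_mul_weight, ← happly]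
  exact (lp.norm_apply_le_norm ENNReal.top_ne_zero _ z).trans (mem_ball_iff_norm.1 hNj).le

theorem exists_seq_frequently_norm_sub_mul_weight_le (hK : IsCompact K) (hconv : Convex ℝ K)
    (hu : u ∈ K) (hv : v ∈ K) (huv : u ≠ v) :
    ∃ φ : ℕ → ℂ → ℂ, (∀ s, Differentiable ℂ (φ s)) ∧
      (∀ s z, ‖φ s z‖ ≤ (s + 1) * (Real.exp (suppFn (segment ℝ u v) z) / (1 + ‖z‖) ^ 4)) ∧
      ∀ g, MemExp K g → ∀ n : ℕ, 0 < n → ∀ ε : ℝ, 0 < ε →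
        ∃ᶠ s in atTop, ∀ z, ‖φ s z - g z‖ * weight K n z ≤ ε := by
  obtain ⟨B, hB0, hB⟩ := exists_norm_dampedComb_le huv
  obtain ⟨ψ, hψB, hψ⟩ := exists_frequently_eq_of_slow (hB0.trans_le zero_le_one)
  refine ⟨fun s => dampedComb u v (ψ s), fun s => differentiable_dampedComb u v _,
    fun s z => (hB _ z).trans ?_, fun g hg n hn ε hε => ?_⟩
  · gcongr
    exact hψB s
  · obtain ⟨m, hm⟩ := exists_norm_dampedComb_sub_mul_weight_le hK hconv hu hv huv hg hn hε
    exact (hψ m).mono fun s hs => by simpa only [hs] using hm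

end DenseSequence

section LowerDensity

theorem lowerDensity_pos_of_injective {A : Set ℕ} {p : ℕ → ℕ} {C : ℕ} (hC : 0 < C)
    (hp : Function.Injective p) (hpC : ∀ q, p q ≤ C * (q + 1)) (hpA : ∀ q, p q ∈ A) :
    0 < lowerDensity A := by
  classical
  have hcard (N : ℕ) : N / C ≤ ((Finset.range (N + 1)).filter (· ∈ A)).card := by
    rw [← Finset.card_range (N / C)]
    refine Finset.card_le_card_of_injOn p (fun q hq => ?_) hp.injOn
    have hq : C * (q + 1) ≤ N :=
      (Nat.mul_le_mul_left C (Finset.mem_range.1 hq)).trans (Nat.mul_div_le N C)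
    simpa [hpA q, Nat.lt_succ_iff] using (hpC q).trans hq
  have hupper (N : ℕ) : (((Finset.range (N + 1)).filter (· ∈ A)).card : ℝ) / N ≤ 2 := by
    have hle : ((Finset.range (N + 1)).filter (· ∈ A)).card ≤ N + 1 := by
      simpa using Finset.card_filter_le (Finset.range (N + 1)) (· ∈ A)
    rcases N.eq_zero_or_pos with rfl | hN
    · simp
    · rw [div_le_iff₀ (by positivity)]
      exact_mod_cast hle.trans (by omega)
  have hC' : (0 : ℝ) < C := Nat.cast_pos.2 hC
  refine lt_of_lt_of_le (by positivity : (0 : ℝ) < 1 / (2 * C)) ?_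
  unfold lowerDensity
  refine le_liminf_of_le (isBoundedUnder_of ⟨2, fun N => ?_⟩).isCoboundedUnder_ge ?_
  · convert! hupper N
  · filter_upwards [eventually_ge_atTop (2 * C)] with N hN
    have hlt : N < (N / C + 1) * C := by
      rw [add_mul, one_mul]
      exact Nat.lt_div_mul_add hC
    have hlt' : (N : ℝ) < ((N / C : ℕ) + 1) * C := by exact_mod_cast hlt
    have hN' : 2 * (C : ℝ) ≤ N := by exact_mod_cast hN
    have hcard' : ((N / C : ℕ) : ℝ) ≤ ((Finset.range (N + 1)).filter (· ∈ A)).card := by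
      exact_mod_cast hcard N
    rw [le_div_iff₀ (by linarith), one_div_mul_eq_div, div_le_iff₀ (by positivity)]
    have : (N : ℝ) ≤ (N / C : ℕ) * (2 * C) := by linarith
    refine this.trans (mul_le_mul_of_nonneg_right ?_ (by positivity))
    convert! hcard'

end LowerDensity

section SpacedPositions

/-- Positions for blocks of radii `ℓ 0, ℓ 1, …` placed one after the other along `ℕ`, with gaps
that keep distinct centres `m` and `m'` at distance at least `ℓ m + ℓ m' + 2 * |m - m'|`. -/
def spacedPos (ℓ : ℕ → ℕ) (m : ℕ) : ℕ := ∑ i ∈ Finset.range m, 2 * (ℓ i + 1) + ℓ m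

lemma spacedPos_succ (ℓ : ℕ → ℕ) (m : ℕ) :
    spacedPos ℓ (m + 1) = spacedPos ℓ m + ℓ m + ℓ (m + 1) + 2 := by
  rw [spacedPos, spacedPos, Finset.sum_range_succ]
  ring

lemma le_spacedPos (ℓ : ℕ → ℕ) (m : ℕ) : m ≤ spacedPos ℓ m := by
  induction m with
  | zero => exact Nat.zero_le _
  | succ m ih =>
    rw [spacedPos_succ]
    omega

lemma spacedPos_add_le (ℓ : ℕ → ℕ) (m k : ℕ) :
    spacedPos ℓ m + ℓ m + ℓ (m + k + 1) + 2 * (k + 1) ≤ spacedPos ℓ (m + k + 1) := by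
  induction k with
  | zero => simp [spacedPos_succ]
  | succ k ih =>
    rw [← add_assoc, spacedPos_succ ℓ (m + k + 1)]
    omega

lemma spacedPos_add_le_of_lt (ℓ : ℕ → ℕ) {m m' : ℕ} (h : m < m') :
    (spacedPos ℓ m : ℝ) + ℓ m + ℓ m' + 2 * ((m' : ℝ) - m) ≤ spacedPos ℓ m' := by
  obtain ⟨k, rfl⟩ := Nat.exists_eq_add_of_lt h
  have hk : (spacedPos ℓ m : ℝ) + ℓ m + ℓ (m + k + 1) + 2 * (k + 1) ≤ spacedPos ℓ (m + k + 1) := by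
    exact_mod_cast spacedPos_add_le ℓ m k
  push_cast
  linarith

lemma le_abs_spacedPos_sub (ℓ : ℕ → ℕ) {m m' : ℕ} (h : m ≠ m') :
    (ℓ m : ℝ) + ℓ m' + 2 * |(m : ℝ) - m'| ≤ |(spacedPos ℓ m : ℝ) - spacedPos ℓ m'| := by
  rcases h.lt_or_gt with h | h
  · have := spacedPos_add_le_of_lt ℓ h
    rw [abs_sub_comm, abs_of_pos (sub_pos.2 (Nat.cast_lt.2 h)), abs_sub_comm]
    exact (le_sub_iff_add_le.2 (by linarith)).trans (le_abs_self _)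
  · have := spacedPos_add_le_of_lt ℓ h
    rw [abs_of_pos (sub_pos.2 (Nat.cast_lt.2 h))]
    exact (le_sub_iff_add_le.2 (by linarith)).trans (le_abs_self _)

lemma spacedPos_injective (ℓ : ℕ → ℕ) : Function.Injective (spacedPos ℓ) :=
  (strictMono_nat_of_lt_succ fun m => by rw [spacedPos_succ]; omega).injective

end SpacedPositions

section RulerSequence

/-- The ruler sequence `0, 1, 0, 2, 0, 1, 0, 3, …`: the multiplicity of `2` in `m + 1`. It grows
logarithmically, and takes each value on an arithmetic progression. -/
def ruler (m : ℕ) : ℕ := padicValNat 2 (m + 1)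

lemma ruler_two_pow_mul_sub_one (s q : ℕ) : ruler (2 ^ s * (2 * q + 1) - 1) = s := by
  have hpos : 0 < 2 ^ s * (2 * q + 1) := by positivity
  rw [ruler, Nat.sub_add_cancel hpos, padicValNat.mul (by positivity) (by positivity),
    padicValNat.prime_pow, padicValNat.eq_zero_of_not_dvd (by omega), add_zero]

lemma sum_ruler (m : ℕ) : ∑ i ∈ Finset.range m, ruler i = padicValNat 2 m.factorial := by
  induction m with
  | zero => simp
  | succ m ih =>
    rw [Finset.sum_range_succ, ih, Nat.factorial_succ,
      padicValNat.mul m.succ_ne_zero m.factorial_ne_zero, add_comm, ruler]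

lemma sum_ruler_le (m : ℕ) : ∑ i ∈ Finset.range m, ruler i ≤ m := by
  have h := sub_one_mul_padicValNat_factorial (p := 2) m
  rw [Nat.add_one_sub_one, one_mul] at h
  exact (sum_ruler m).trans_le (h.trans_le (Nat.sub_le _ _))

lemma ruler_le (m : ℕ) : ruler m ≤ m :=
  Nat.lt_succ_iff.1 ((padicValNat_le_nat_log _).trans_lt (Nat.log_lt_self 2 m.succ_ne_zero))

lemma ruler_add_one_le (m : ℕ) : (ruler m : ℝ) + 1 ≤ 2 * (1 + Real.log (1 + m)) := by
  have hpow : 2 ^ ruler m ≤ m + 1 := Nat.le_of_dvd m.succ_pos pow_padicValNat_dvd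
  have hlog : (ruler m : ℝ) * Real.log 2 ≤ Real.log (1 + m) := by
    rw [← Real.log_pow, add_comm]
    exact Real.log_le_log (by positivity) (by exact_mod_cast hpow)
  nlinarith [Real.log_two_gt_d9, (ruler m).cast_nonneg (α := ℝ)]

lemma spacedPos_ruler_le (m : ℕ) : spacedPos ruler m ≤ 5 * m := by
  have hsum := sum_ruler_le m
  have := ruler_le m
  rw [spacedPos, ← Finset.mul_sum, Finset.sum_add_distrib, Finset.sum_const, Finset.card_range,
    smul_eq_mul, mul_one]
  omega

theorem lowerDensity_pos_of_ruler_eq {A : Set ℕ} (s : ℕ)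
    (hA : ∀ m, ruler m = s → spacedPos ruler m ∈ A) : 0 < lowerDensity A := by
  have hs : 0 < 2 ^ s := by positivity
  refine lowerDensity_pos_of_injective (p := fun q => spacedPos ruler (2 ^ s * (2 * q + 1) - 1))
    (C := 10 * 2 ^ s) (by positivity) ((spacedPos_injective ruler).comp fun q q' h => ?_)
    (fun q => (spacedPos_ruler_le _).trans ?_) fun q => hA _ (ruler_two_pow_mul_sub_one s q)
  · have h2 : 2 ^ s * (2 * q + 1) = 2 ^ s * (2 * q' + 1) := by
      have hq : 0 < 2 ^ s * (2 * q + 1) := by positivity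
      have hq' : 0 < 2 ^ s * (2 * q' + 1) := by positivity
      omega
    have := Nat.eq_of_mul_eq_mul_left hs h2
    omega
  · calc _ ≤ 5 * (2 ^ s * (2 * q + 1)) := Nat.mul_le_mul_left 5 (Nat.sub_le _ _)
      _ ≤ 10 * 2 ^ s * (q + 1) := by linarith

end RulerSequence

section InverseSquareSums

lemma summable_one_div_one_add_abs_sq : Summable fun j : ℤ => 1 / (1 + |(j : ℝ)|) ^ 2 := by
  have hnat : Summable fun n : ℕ => 1 / (1 + (n : ℝ)) ^ 2 :=
    ((summable_nat_add_iff 1).2 (Real.summable_one_div_nat_pow.2 one_lt_two)).congr fun n => by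
      rw [Nat.cast_add_one, add_comm]
  exact .of_nat_of_neg (hnat.congr fun n => by simp) (hnat.congr fun n => by simp)

lemma one_div_one_add_abs_sub_sq_le (x : ℝ) (k : ℤ) :
    1 / (1 + |x - k|) ^ 2 ≤ 4 * (1 / (1 + |((k - ⌊x⌋ : ℤ) : ℝ)|) ^ 2) := by
  have hfloor : |((k - ⌊x⌋ : ℤ) : ℝ)| ≤ |x - k| + 1 := by
    have hfract : |x - ⌊x⌋| ≤ 1 := by
      rw [Int.self_sub_floor, abs_of_nonneg (Int.fract_nonneg x)]
      exact (Int.fract_lt_one x).le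
    have := abs_sub_le (k : ℝ) x ⌊x⌋
    rw [abs_sub_comm (k : ℝ) x] at this
    push_cast
    linarith
  rw [mul_one_div, div_le_div_iff₀ (by positivity) (by positivity), one_mul]
  calc (1 + |((k - ⌊x⌋ : ℤ) : ℝ)|) ^ 2 ≤ (2 * (1 + |x - k|)) ^ 2 := by
        gcongr
        linarith [abs_nonneg (x - k)]
    _ = 4 * (1 + |x - k|) ^ 2 := by ring

lemma summable_one_div_one_add_abs_sub_sq {p : ℕ → ℕ} (hp : Function.Injective p) (x : ℝ) :
    Summable fun m => 1 / (1 + |x - p m|) ^ 2 := by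
  have hinj : Function.Injective fun m => (p m : ℤ) - ⌊x⌋ := fun a b h => hp (by simpa using h)
  exact .of_nonneg_of_le (fun m => by positivity) (fun m => one_div_one_add_abs_sub_sq_le x (p m))
    ((summable_one_div_one_add_abs_sq.comp_injective hinj).mul_left 4)

lemma exists_tsum_one_div_one_add_abs_sub_sq_le :
    ∃ S : ℝ, ∀ p : ℕ → ℕ, Function.Injective p → ∀ x : ℝ,
      ∑' m, 1 / (1 + |x - p m|) ^ 2 ≤ S := by
  refine ⟨4 * ∑' j : ℤ, 1 / (1 + |(j : ℝ)|) ^ 2, fun p hp x => ?_⟩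
  have hinj : Function.Injective fun m => (p m : ℤ) - ⌊x⌋ := fun a b h => hp (by simpa using h)
  have hsum := summable_one_div_one_add_abs_sq.comp_injective hinj
  refine ((summable_one_div_one_add_abs_sub_sq hp x).tsum_le_tsum
    (fun m => one_div_one_add_abs_sub_sq_le x (p m)) (hsum.mul_left 4)).trans ?_
  rw [tsum_mul_left]
  gcongr
  exact tsum_comp_le_tsum_of_inj summable_one_div_one_add_abs_sq (fun j => by positivity) hinj

lemma exists_norm_tsum_le_of_norm_le :
    ∃ S : ℝ, ∀ p : ℕ → ℕ, Function.Injective p → ∀ (x B : ℝ) (T : ℕ → ℂ),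
      (∀ m, ‖T m‖ ≤ B * (1 / (1 + |x - p m|) ^ 2)) → ‖∑' m, T m‖ ≤ S * B := by
  obtain ⟨S, hS⟩ := exists_tsum_one_div_one_add_abs_sub_sq_le
  refine ⟨S, fun p hp x B T hT => ?_⟩
  have hB : 0 ≤ B := nonneg_of_mul_nonneg_left ((norm_nonneg _).trans (hT 0)) (by positivity)
  have hle := tsum_of_norm_bounded ((summable_one_div_one_add_abs_sub_sq hp x).mul_left B).hasSum hT
  rw [tsum_mul_left, mul_comm] at hle
  exact hle.trans (mul_le_mul_of_nonneg_right (hS p hp x) hB)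

end InverseSquareSums

section SpacedSum

lemma one_add_norm_le_mul (z w : ℂ) : 1 + ‖w‖ ≤ (1 + ‖z‖) * (1 + ‖z + w‖) := by
  have : ‖w‖ ≤ ‖z + w‖ + ‖z‖ := by simpa using norm_sub_le (z + w) z
  nlinarith [norm_nonneg z, norm_nonneg (z + w)]

lemma one_add_log_le_mul {a b c : ℝ} (ha : 0 ≤ a) (hb : 0 ≤ b) (hc : 0 ≤ c)
    (h : 1 + a ≤ (1 + b) * (1 + c)) :
    1 + Real.log (1 + a) ≤ (1 + Real.log (1 + b)) * (1 + c) := by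
  have hlog : Real.log (1 + a) ≤ Real.log (1 + b) + Real.log (1 + c) := by
    rw [← Real.log_mul (by positivity) (by positivity)]
    exact Real.log_le_log (by positivity) h
  have hc' := Real.log_le_sub_one_of_pos (by positivity : 0 < 1 + c)
  nlinarith [mul_nonneg (Real.log_nonneg (by linarith : 1 ≤ 1 + b)) hc]

/-- The sum of the blocks `φ (ℓ m)`, the `m`-th one translated to the position `spacedPos ℓ m`. -/
noncomputable def spacedSum (ℓ : ℕ → ℕ) (φ : ℕ → ℂ → ℂ) (z : ℂ) : ℂ :=
  ∑' m, φ (ℓ m) (z - spacedPos ℓ m)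

variable {ℓ : ℕ → ℕ} {φ : ℕ → ℂ → ℂ} {H : ℂ → ℝ}

lemma norm_block_add_ofReal_le (hH : ∀ (z : ℂ) (x : ℝ), H (z + x) = H z)
    (hφ : ∀ s z, ‖φ s z‖ ≤ (s + 1) * (Real.exp (H z) / (1 + ‖z‖) ^ 4)) (s : ℕ) (z : ℂ) (x : ℝ) :
    ‖φ s (z + x)‖ ≤ (1 + ‖z‖) ^ 4 * Real.exp (H z) * ((s + 1) / (1 + |x|) ^ 4) := by
  refine (hφ s _).trans ?_
  have hx : (1 + |x|) ^ 4 ≤ ((1 + ‖z‖) * (1 + ‖z + x‖)) ^ 4 := by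
    gcongr
    simpa using one_add_norm_le_mul z x
  rw [hH, mul_div_assoc', mul_div_assoc', div_le_div_iff₀ (by positivity) (by positivity)]
  calc _ ≤ (s + 1) * Real.exp (H z) * ((1 + ‖z‖) * (1 + ‖z + x‖)) ^ 4 := by gcongr
    _ = _ := by ring

lemma norm_block_sub_spacedPos_le (hH : ∀ (z : ℂ) (x : ℝ), H (z + x) = H z)
    (hφ : ∀ s z, ‖φ s z‖ ≤ (s + 1) * (Real.exp (H z) / (1 + ‖z‖) ^ 4)) (m : ℕ) (z : ℂ) :
    ‖φ (ℓ m) (z - spacedPos ℓ m)‖ ≤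
      (1 + ‖z‖) ^ 4 * Real.exp (H z) * (1 / (1 + |0 - (spacedPos ℓ m : ℝ)|) ^ 2) := by
  have hle := norm_block_add_ofReal_le hH hφ (ℓ m) z (-spacedPos ℓ m)
  rw [ofReal_neg, ofReal_natCast, ← sub_eq_add_neg] at hle
  refine hle.trans (mul_le_mul_of_nonneg_left ?_ (by positivity))
  have hℓ : (ℓ m : ℝ) ≤ spacedPos ℓ m := Nat.cast_le.2 (Nat.le_add_left _ _)
  rw [zero_sub, abs_neg, Nat.abs_cast, div_le_div_iff₀ (by positivity) (by positivity)]
  calc _ ≤ ((spacedPos ℓ m : ℝ) + 1) * (1 + spacedPos ℓ m) ^ 2 := by gcongr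
    _ = (1 + (spacedPos ℓ m : ℝ)) ^ 3 := by ring
    _ ≤ (1 + (spacedPos ℓ m : ℝ)) ^ 4 := pow_le_pow_right₀ (by simp) (by norm_num)
    _ = _ := (one_mul _).symm

lemma summable_block (hH : ∀ (z : ℂ) (x : ℝ), H (z + x) = H z)
    (hφ : ∀ s z, ‖φ s z‖ ≤ (s + 1) * (Real.exp (H z) / (1 + ‖z‖) ^ 4)) (z : ℂ) :
    Summable fun m => φ (ℓ m) (z - spacedPos ℓ m) :=
  .of_norm_bounded ((summable_one_div_one_add_abs_sub_sq (spacedPos_injective ℓ) 0).mul_left _)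
    fun m => norm_block_sub_spacedPos_le hH hφ m z

theorem differentiable_spacedSum (hd : ∀ s, Differentiable ℂ (φ s)) (hHc : Continuous H)
    (hH : ∀ (z : ℂ) (x : ℝ), H (z + x) = H z)
    (hφ : ∀ s z, ‖φ s z‖ ≤ (s + 1) * (Real.exp (H z) / (1 + ‖z‖) ^ 4)) :
    Differentiable ℂ (spacedSum ℓ φ) := by
  intro z
  obtain ⟨M, hM⟩ := (isCompact_closedBall (0 : ℂ) (‖z‖ + 1)).bddAbove_image
    (f := fun w => (1 + ‖w‖) ^ 4 * Real.exp (H w)) (by fun_prop)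
  have hball : DifferentiableOn ℂ (spacedSum ℓ φ) (Metric.ball 0 (‖z‖ + 1)) :=
    differentiableOn_tsum_of_summable_norm
      ((summable_one_div_one_add_abs_sub_sq (spacedPos_injective ℓ) 0).mul_left M)
      (fun m => ((hd (ℓ m)).comp (differentiable_id.sub_const _)).differentiableOn)
      Metric.isOpen_ball fun m w hw => (norm_block_sub_spacedPos_le hH hφ m w).trans <|
        mul_le_mul_of_nonneg_right (hM ⟨w, Metric.ball_subset_closedBall hw, rfl⟩) (by positivity)
  exact hball.differentiableAt (Metric.isOpen_ball.mem_nhds (by simp))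

theorem exists_norm_spacedSum_le {C : ℝ} (hℓ : ∀ m, (ℓ m : ℝ) + 1 ≤ C * (1 + Real.log (1 + m)))
    (hH : ∀ (z : ℂ) (x : ℝ), H (z + x) = H z)
    (hφ : ∀ s z, ‖φ s z‖ ≤ (s + 1) * (Real.exp (H z) / (1 + ‖z‖) ^ 4)) :
    ∃ C', ∀ z, ‖spacedSum ℓ φ z‖ ≤ C' * (1 + Real.log (1 + ‖z‖)) * Real.exp (H z) := by
  obtain ⟨S, hS⟩ := exists_norm_tsum_le_of_norm_le
  have hC : 0 ≤ C := by
    have := hℓ 0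
    simp only [Nat.cast_zero, add_zero, Real.log_one, mul_one] at this
    exact (by positivity : (0 : ℝ) ≤ ℓ 0 + 1).trans this
  refine ⟨S * C, fun z => (hS _ (spacedPos_injective ℓ) z.re
    (C * ((1 + Real.log (1 + ‖z‖)) * Real.exp (H z))) _ fun m => ?_).trans_eq (by ring)⟩
  set d := ‖z - spacedPos ℓ m‖
  have hd : 0 ≤ d := norm_nonneg _
  have hre : |z.re - spacedPos ℓ m| ≤ d := by simpa using abs_re_le_norm (z - spacedPos ℓ m)
  have hlog0 : 0 ≤ 1 + Real.log (1 + ‖z‖) :=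
    add_nonneg zero_le_one (Real.log_nonneg (by simp))
  have hlog : 1 + Real.log (1 + m) ≤ (1 + Real.log (1 + ‖z‖)) * (1 + d) := by
    refine one_add_log_le_mul m.cast_nonneg (norm_nonneg z) hd ?_
    have hm : (m : ℝ) ≤ spacedPos ℓ m := Nat.cast_le.2 (le_spacedPos ℓ m)
    have hpos : 1 + (spacedPos ℓ m : ℝ) ≤ (1 + ‖z‖) * (1 + d) := by
      simpa [d, ← sub_eq_add_neg] using one_add_norm_le_mul z (-spacedPos ℓ m)
    linarith
  have hHz : H (z - spacedPos ℓ m) = H z := by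
    simpa using (hH (z - spacedPos ℓ m) (spacedPos ℓ m)).symm
  have hdiv : (1 + d) / (1 + d) ^ 4 ≤ 1 / (1 + |z.re - spacedPos ℓ m|) ^ 2 := by
    rw [div_le_div_iff₀ (by positivity) (by positivity), one_mul]
    calc _ ≤ (1 + d) * (1 + d) ^ 2 := by gcongr
      _ = (1 + d) ^ 3 := by ring
      _ ≤ (1 + d) ^ 4 := pow_le_pow_right₀ (by linarith) (by norm_num)
  calc _ ≤ ((ℓ m : ℝ) + 1) * (Real.exp (H z) / (1 + d) ^ 4) := by
        rw [← hHz]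
        exact hφ (ℓ m) _
    _ ≤ C * ((1 + Real.log (1 + ‖z‖)) * (1 + d)) * (Real.exp (H z) / (1 + d) ^ 4) := by
        gcongr
        exact (hℓ m).trans (mul_le_mul_of_nonneg_left hlog hC)
    _ = C * ((1 + Real.log (1 + ‖z‖)) * Real.exp (H z)) * ((1 + d) / (1 + d) ^ 4) := by ring
    _ ≤ _ := by gcongr

lemma add_one_div_one_add_pow_four_le {a b j D : ℝ} (ha : 0 ≤ a) (hb : 0 ≤ b) (hj : 0 ≤ j)
    (h : a + b + j ≤ D) : (b + 1) / (1 + D) ^ 4 ≤ 1 / (a + 1) * (1 / (1 + j) ^ 2) := by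
  have hD : 0 ≤ D := (by positivity : 0 ≤ a + b + j).trans h
  rw [one_div_mul_one_div, div_le_div_iff₀ (by positivity) (by positivity), one_mul]
  calc (b + 1) * ((a + 1) * (1 + j) ^ 2) ≤ (D + 1) * ((D + 1) * (1 + D) ^ 2) := by
        gcongr <;> linarith
    _ = (1 + D) ^ 4 := by ring

theorem exists_norm_spacedSum_add_sub_le (hH : ∀ (z : ℂ) (x : ℝ), H (z + x) = H z)
    (hφ : ∀ s z, ‖φ s z‖ ≤ (s + 1) * (Real.exp (H z) / (1 + ‖z‖) ^ 4)) :
    ∃ C, ∀ m z, ‖spacedSum ℓ φ (z + spacedPos ℓ m) - φ (ℓ m) z‖ ≤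
      C * ((1 + ‖z‖) ^ 4 * Real.exp (H z)) / (ℓ m + 1) := by
  obtain ⟨S, hS⟩ := exists_norm_tsum_le_of_norm_le
  refine ⟨S, fun m z => ?_⟩
  have hsplit := (summable_block (ℓ := ℓ) hH hφ (z + spacedPos ℓ m)).tsum_eq_add_tsum_ite m
  rw [add_sub_cancel_right] at hsplit
  rw [spacedSum, hsplit, add_sub_cancel_left, div_eq_mul_one_div, mul_assoc]
  refine hS id Function.injective_id m _ _ fun m' => ?_
  split_ifs with hm
  · rw [norm_zero]
    positivity
  · have hsep := le_abs_spacedPos_sub ℓ (Ne.symm hm)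
    have hle := norm_block_add_ofReal_le hH hφ (ℓ m') z (spacedPos ℓ m - spacedPos ℓ m')
    rw [ofReal_sub, ofReal_natCast, ofReal_natCast, ← add_sub_assoc] at hle
    refine hle.trans ?_
    rw [mul_assoc _ (1 / _)]
    refine mul_le_mul_of_nonneg_left (add_one_div_one_add_pow_four_le (ℓ m).cast_nonneg
      (ℓ m').cast_nonneg (abs_nonneg _) ?_) (by positivity)
    rw [id]
    linarith [abs_nonneg ((m : ℝ) - m')]

end SpacedSum

section FrequentHypercyclicity

variable {K J : Set ℂ} {f : ℂ → ℂ} {n : ℕ}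

lemma exists_one_add_pow_mul_exp_suppFn_mul_weight_le (hJK : ∀ z, suppFn J z ≤ suppFn K z) (k : ℕ)
    (hn : 0 < n) :
    ∃ C, ∀ z, (1 + ‖z‖) ^ k * Real.exp (suppFn J z) * weight K n z ≤ C := by
  obtain ⟨C, hC⟩ := exists_one_add_pow_mul_exp_le k (by positivity : 0 < 1 / (n : ℝ))
  refine ⟨C, fun z => le_trans ?_ (hC ‖z‖ (norm_nonneg z))⟩
  rw [weight, mul_assoc, ← Real.exp_add, one_div_mul_eq_div]
  gcongr
  linarith [hJK z]

lemma memExp_of_norm_le (hf : Differentiable ℂ f) (hJK : ∀ z, suppFn J z ≤ suppFn K z) (k : ℕ)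
    {C : ℝ} (hC : ∀ z, ‖f z‖ ≤ C * ((1 + ‖z‖) ^ k * Real.exp (suppFn J z))) :
    MemExp K f := by
  refine ⟨hf, fun n hn => ?_⟩
  obtain ⟨B, hB⟩ := exists_one_add_pow_mul_exp_suppFn_mul_weight_le hJK k hn
  have hC0 : 0 ≤ C := nonneg_of_mul_nonneg_left ((norm_nonneg _).trans (hC 0)) (by positivity)
  refine ⟨C * B, forall_mem_range.2 fun z => ?_⟩
  calc _ ≤ C * ((1 + ‖z‖) ^ k * Real.exp (suppFn J z)) * weight K n z :=
        mul_le_mul_of_nonneg_right (hC z) (weight_pos K n z).le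
    _ = C * ((1 + ‖z‖) ^ k * Real.exp (suppFn J z) * weight K n z) := mul_assoc _ _ _
    _ ≤ C * B := mul_le_mul_of_nonneg_left (hB z) hC0

lemma expNorm_le {C : ℝ} (h : ∀ z, ‖f z‖ * weight K n z ≤ C) : expNorm K n f ≤ C :=
  csSup_le (range_nonempty _) (forall_mem_range.2 h)

lemma lowerDensity_expNorm_translate_sub_lt_pos {φ : ℕ → ℂ → ℂ} {C : ℝ}
    (hJK : ∀ z, suppFn J z ≤ suppFn K z)
    (hf : ∀ m z, ‖f (z + spacedPos ruler m) - φ (ruler m) z‖ ≤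
      C * ((1 + ‖z‖) ^ 4 * Real.exp (suppFn J z)) / (ruler m + 1))
    {g : ℂ → ℂ} (hn : 0 < n)
    (hφ : ∀ ε : ℝ, 0 < ε → ∃ᶠ s in atTop, ∀ z, ‖φ s z - g z‖ * weight K n z ≤ ε)
    {ε : ℝ} (hε : 0 < ε) :
    0 < lowerDensity {k : ℕ | expNorm K n (fun z => f (z + (k : ℂ)) - g z) < ε} := by
  obtain ⟨B, hB⟩ := exists_one_add_pow_mul_exp_suppFn_mul_weight_le hJK 4 hn
  have hlim : Tendsto (fun s : ℕ => C * B / ((s : ℝ) + 1)) atTop (𝓝 0) := by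
    simpa [div_eq_mul_inv] using tendsto_one_div_add_atTop_nhds_zero_nat.const_mul (C * B)
  obtain ⟨s, hs, hsε⟩ := ((hφ (ε / 2) (by positivity)).and_eventually
    (hlim.eventually_lt_const (half_pos hε))).exists
  have hC0 : 0 ≤ C := by
    have h := (norm_nonneg _).trans (hf 0 0)
    rw [mul_div_assoc] at h
    exact nonneg_of_mul_nonneg_left h (by positivity)
  refine lowerDensity_pos_of_ruler_eq s fun m hm => ?_
  refine (expNorm_le (C := C * B / (s + 1) + ε / 2) fun z => ?_).trans_lt (by linarith)
  have hfm := hf m z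
  rw [hm] at hfm
  calc _ ≤ (‖f (z + spacedPos ruler m) - φ s z‖ + ‖φ s z - g z‖) * weight K n z :=
        mul_le_mul_of_nonneg_right (norm_sub_le_norm_sub_add_norm_sub _ _ _) (weight_pos K n z).le
    _ = ‖f (z + spacedPos ruler m) - φ s z‖ * weight K n z + ‖φ s z - g z‖ * weight K n z :=
        add_mul _ _ _
    _ ≤ C * B / (s + 1) + ε / 2 := add_le_add ?_ (hs z)
  calc _ ≤ C * ((1 + ‖z‖) ^ 4 * Real.exp (suppFn J z)) / (s + 1) * weight K n z :=
        mul_le_mul_of_nonneg_right hfm (weight_pos K n z).le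
    _ = C * ((1 + ‖z‖) ^ 4 * Real.exp (suppFn J z) * weight K n z) / (s + 1) := by ring
    _ ≤ C * B / (s + 1) := by gcongr; exact hB z

lemma log_one_add_le {x : ℝ} (hx : 0 ≤ x) : Real.log (1 + x) ≤ x := by
  simpa using Real.log_le_sub_one_of_pos (by positivity : 0 < 1 + x)

lemma one_add_log_one_add_le {c x : ℝ} (hc : 0 < c) (hx : 0 ≤ x) :
    1 + Real.log (1 + x) ≤ (2 + 1 / c) * (1 + x ^ c) := by
  have hpow : 0 ≤ x ^ c := Real.rpow_nonneg hx c
  have hc' : 0 < 1 / c := by positivity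
  have hprod : (2 + 1 / c) * (1 + x ^ c) = 2 + 1 / c + 2 * x ^ c + x ^ c / c := by ring
  rcases le_total x 1 with hx1 | hx1
  · have : 0 ≤ x ^ c / c := by positivity
    linarith [log_one_add_le hx]
  · have hlog : Real.log (1 + x) ≤ Real.log 2 + Real.log x := by
      rw [← Real.log_mul two_ne_zero (by positivity)]
      exact Real.log_le_log (by positivity) (by linarith)
    linarith [Real.log_two_lt_d9, Real.log_le_rpow_div hx hc]

lemma exists_norm_le_mul_one_add_rpow {c C : ℝ} (hc : 0 < c)
    (h : ∀ x : ℝ, ‖f x‖ ≤ C * (1 + Real.log (1 + |x|))) :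
    ∃ C', ∀ x : ℝ, ‖f x‖ ≤ C' * (1 + |x| ^ c) := by
  have hC : 0 ≤ C := by simpa using (norm_nonneg _).trans (h 0)
  refine ⟨C * (2 + 1 / c), fun x => (h x).trans ?_⟩
  rw [mul_assoc]
  exact mul_le_mul_of_nonneg_left (one_add_log_one_add_le hc (abs_nonneg x)) hC

end FrequentHypercyclicity

theorem stmt2_general (K : Set ℂ) (hKc : IsCompact K) (hKconv : Convex ℝ K)
    (u v : ℂ) (hu : u ∈ K) (hv : v ∈ K) (huv : u ≠ v)
    (hur : u.re = 0) (hvr : v.re = 0) :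
    ∃ f : ℂ → ℂ, FHCExp K f ∧ ∃ C : ℝ, ∀ x : ℝ, ‖f (x : ℂ)‖ ≤ C * (1 + Real.log (1 + |x|)) := by
  obtain ⟨φ, hd, hφ, happrox⟩ := exists_seq_frequently_norm_sub_mul_weight_le hKc hKconv hu hv huv
  have him : ∀ k ∈ segment ℝ u v, k.re = 0 := by
    rintro _ ⟨a, b, _, _, _, rfl⟩
    simp [hur, hvr]
  have hper := suppFn_add_ofReal him
  have hle := suppFn_mono ⟨u, left_mem_segment ℝ u v⟩ (hKconv.segment_subset hu hv) hKc
  have hdiff : Differentiable ℂ (spacedSum ruler φ) := differentiable_spacedSum hd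
    (continuous_suppFn (isCompact_segment u v) ⟨u, left_mem_segment ℝ u v⟩) hper hφ
  obtain ⟨C, hC⟩ := exists_norm_spacedSum_le ruler_add_one_le hper hφ
  have hreal (x : ℝ) : ‖spacedSum ruler φ x‖ ≤ C * (1 + Real.log (1 + |x|)) := by
    simpa [suppFn_ofReal_eq_zero him] using hC x
  have hC0 : 0 ≤ C := by simpa using (norm_nonneg _).trans (hreal 0)
  obtain ⟨C', hC'⟩ := exists_norm_spacedSum_add_sub_le (ℓ := ruler) hper hφ
  refine ⟨spacedSum ruler φ, ⟨memExp_of_norm_le (C := C) hdiff hle 1 fun z => ?_,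
    fun g hg n hn ε hε => lowerDensity_expNorm_translate_sub_lt_pos hle hC' hn
      (happrox g hg n hn) hε⟩, C, hreal⟩
  refine (hC z).trans ?_
  rw [mul_assoc, pow_one]
  gcongr
  exact log_one_add_le (norm_nonneg z)

/-- **Theorem 3.** If `K` contains two distinct purely imaginary points and `c > 1`,
there is a frequently Birkhoff-hypercyclic function in `Exp(K)` growing like
`O(1 + |x|^c)` on the real axis. -/
theorem stmt2 (K : Set ℂ) (hKc : IsCompact K) (hKconv : Convex ℝ K)
    (u v : ℂ) (hu : u ∈ K) (hv : v ∈ K) (huv : u ≠ v)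
    (hur : u.re = 0) (hvr : v.re = 0)
    (c : ℝ) (hc : 1 < c) :
    ∃ f : ℂ → ℂ, FHCExp K f ∧ ∃ C : ℝ, ∀ x : ℝ, ‖f (x : ℂ)‖ ≤ C * (1 + |x| ^ c) := by
  obtain ⟨f, hf, C, hC⟩ := stmt2_general K hKc hKconv u v hu hv huv hur hvr
  exact ⟨f, hf, exists_norm_le_mul_one_add_rpow (zero_lt_one.trans hc) hC⟩
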